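/- arXiv:math/0410172 — 3 statements merged into one kernel-verified Lean document; each statement's English description precedes it below -/
import Mathlib

section
/- (Lemma 2.2: stability of T_p under weak convergence.) Let (E,d) be a Polish space and let (μ_n)_{n∈ℕ} and μ be probability measures on E. If μ_n satisfies T_p(C) for every n and μ_n → μ weakly, then μ satisfies T_p(C). -/
open MeasureTheory ProbabilityTheory ENNReal

noncomputable section

/-- `π` is a coupling of `μ` and `ν`. -/
def IsCoupling {E F : Type*} [MeasurableSpace E] [MeasurableSpace F]
    (π : Measure (E × F)) (μ : Measure E) (ν : Measure F) : Prop :=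
  π.map Prod.fst = μ ∧ π.map Prod.snd = ν

/-- The `L^p`-Wasserstein distance associated to the cost function `d`, valued in `ℝ≥0∞`. -/
def wassersteinDist {E : Type*} [MeasurableSpace E] (p : ℝ) (d : E → E → ℝ)
    (μ ν : Measure E) : ℝ≥0∞ :=
  ⨅ (π : Measure (E × E)) (_ : IsCoupling π μ ν),
    (∫⁻ z, ENNReal.ofReal (d z.1 z.2) ^ p ∂π) ^ (1 / p)

/-- The `L^p`-Wasserstein distance for an extended (`ℝ≥0∞`-valued) pseudo-metric `d`. -/
def wassersteinDistE {E : Type*} [MeasurableSpace E] (p : ℝ) (d : E → E → ℝ≥0∞)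
    (μ ν : Measure E) : ℝ≥0∞ :=
  ⨅ (π : Measure (E × E)) (_ : IsCoupling π μ ν),
    (∫⁻ z, d z.1 z.2 ^ p ∂π) ^ (1 / p)

open Classical in
/-- Relative entropy (Kullback information) `H(ν | μ)`, valued in `ℝ≥0∞`. -/
def relEntropy {E : Type*} [MeasurableSpace E] (ν μ : Measure E) : ℝ≥0∞ :=
  if ν ≪ μ ∧ Integrable (fun x => Real.log ((ν.rnDeriv μ x).toReal)) ν then
    ENNReal.ofReal (∫ x, Real.log ((ν.rnDeriv μ x).toReal) ∂ν)
  else ∞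

/-- The transportation cost-information inequality `T_p(C)` for `μ` on `(E, d)`:
`W_p(μ, ν) ≤ √(2 C H(ν|μ))` for every probability measure `ν`, written in the equivalent
squared form `W_p(μ,ν)² ≤ 2C·H(ν|μ)` in `ℝ≥0∞`. -/
def TpIneq {E : Type*} [MeasurableSpace E] (p : ℝ) (d : E → E → ℝ) (C : ℝ)
    (μ : Measure E) : Prop :=
  ∀ ν : Measure E, IsProbabilityMeasure ν →
    wassersteinDist p d μ ν ^ 2 ≤ ENNReal.ofReal (2 * C) * relEntropy ν μ

/-- The transportation cost-information inequality `T_p(C)` for an extended pseudo-metric. -/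
def TpIneqE {E : Type*} [MeasurableSpace E] (p : ℝ) (d : E → E → ℝ≥0∞) (C : ℝ)
    (μ : Measure E) : Prop :=
  ∀ ν : Measure E, IsProbabilityMeasure ν →
    wassersteinDistE p d μ ν ^ 2 ≤ ENNReal.ofReal (2 * C) * relEntropy ν μ

section LowerSemicontinuity

variable {E : Type*} [MeasurableSpace E] [MetricSpace E] [CompleteSpace E]
  [SecondCountableTopology E] [BorelSpace E]

/-- A sequence of couplings of weakly convergent sequences has a weakly convergent subsequence,
whose limit couples the limits. -/
lemma exists_subseq_tendsto_isCoupling {μs νs : ℕ → ProbabilityMeasure E}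
    {μ ν : ProbabilityMeasure E} (hμ : Filter.Tendsto μs Filter.atTop (nhds μ))
    (hν : Filter.Tendsto νs Filter.atTop (nhds ν)) (πs : ℕ → ProbabilityMeasure (E × E))
    (hπs : ∀ n, IsCoupling (πs n : Measure (E × E)) (μs n : Measure E) (νs n : Measure E)) :
    ∃ (π : ProbabilityMeasure (E × E)) (φ : ℕ → ℕ), StrictMono φ ∧
      Filter.Tendsto (πs ∘ φ) Filter.atTop (nhds π) ∧
      IsCoupling (π : Measure (E × E)) (μ : Measure E) (ν : Measure E) := by
  have tight {ρs : ℕ → ProbabilityMeasure E} {ρ : ProbabilityMeasure E}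
      (h : Filter.Tendsto ρs Filter.atTop (nhds ρ)) :
      IsTightMeasureSet {((m : ProbabilityMeasure E) : Measure E) | m ∈ Set.range ρs} :=
    isTightMeasureSet_of_isCompact_closure <|
      h.isCompact_insert_range.closure_of_subset (Set.subset_insert _ _)
  have hcomp : IsCompact (closure (Set.range πs)) := by
    refine isCompact_closure_of_isTightMeasureSet (IsTightMeasureSet.prodMk ?_ ?_)
    · refine (tight hμ).subset ?_
      rintro _ ⟨_, ⟨_, ⟨n, rfl⟩, rfl⟩, rfl⟩
      exact ⟨μs n, ⟨n, rfl⟩, (hπs n).1.symm⟩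
    · refine (tight hν).subset ?_
      rintro _ ⟨_, ⟨_, ⟨n, rfl⟩, rfl⟩, rfl⟩
      exact ⟨νs n, ⟨n, rfl⟩, (hπs n).2.symm⟩
  obtain ⟨π, -, φ, hφ, hlim⟩ := hcomp.tendsto_subseq fun n => subset_closure ⟨n, rfl⟩
  have marginal {ρs : ℕ → ProbabilityMeasure E} {ρ : ProbabilityMeasure E} {f : E × E → E}
      (hf : Continuous f) (hρ : Filter.Tendsto ρs Filter.atTop (nhds ρ))
      (h : ∀ n, (πs n : Measure (E × E)).map f = ρs n) :
      (π : Measure (E × E)).map f = ρ := by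
    have h₁ := ProbabilityMeasure.tendsto_map_of_tendsto_of_continuous _ _ hlim hf
    have h₂ : Filter.Tendsto (fun n => ProbabilityMeasure.map (πs (φ n)) hf.measurable.aemeasurable)
        Filter.atTop (nhds ρ) := by
      refine (hρ.comp hφ.tendsto_atTop).congr fun n => ?_
      exact Subtype.ext (h (φ n)).symm
    exact congrArg (fun m : ProbabilityMeasure E => (m : Measure E)) (tendsto_nhds_unique h₁ h₂)
  exact ⟨π, φ, hφ, hlim, marginal continuous_fst hμ fun n => (hπs n).1,
    marginal continuous_snd hν fun n => (hπs n).2⟩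

/-- The Wasserstein distance is sequentially lower semicontinuous for weak convergence. -/
lemma wassersteinDist_le_of_tendsto {p : ℝ} (hp : 0 < p) {μs νs : ℕ → ProbabilityMeasure E}
    {μ ν : ProbabilityMeasure E} (hμ : Filter.Tendsto μs Filter.atTop (nhds μ))
    (hν : Filter.Tendsto νs Filter.atTop (nhds ν)) {b : ℝ≥0∞}
    (hb : ∀ n, wassersteinDist p dist (μs n : Measure E) (νs n : Measure E) < b) :
    wassersteinDist p dist (μ : Measure E) (ν : Measure E) ≤ b := by
  have hex : ∀ n, ∃ π : ProbabilityMeasure (E × E),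
      IsCoupling (π : Measure (E × E)) (μs n : Measure E) (νs n : Measure E) ∧
      (∫⁻ z, ENNReal.ofReal (dist z.1 z.2) ^ p ∂(π : Measure (E × E))) ^ (1 / p) < b := by
    intro n
    obtain ⟨π, h⟩ := iInf_lt_iff.1 (hb n)
    obtain ⟨hπ, h⟩ := iInf_lt_iff.1 h
    have : IsProbabilityMeasure π := by
      have : IsProbabilityMeasure (π.map Prod.fst) := by rw [hπ.1]; infer_instance
      exact Measure.isProbabilityMeasure_of_map Prod.fst
    exact ⟨⟨π, this⟩, hπ, h⟩
  choose πs hπs hcost using hex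
  obtain ⟨π, φ, -, hlim, hπ⟩ := exists_subseq_tendsto_isCoupling hμ hν πs hπs
  refine (iInf₂_le (π : Measure (E × E)) hπ).trans ?_
  have key := lintegral_le_liminf_lintegral_of_forall_isOpen_measure_le_liminf_measure
    (μ := (π : Measure (E × E))) (μs := fun n => (πs (φ n) : Measure (E × E)))
    (f := fun z => dist z.1 z.2 ^ p)
    ((continuous_fst.dist continuous_snd).rpow_const fun _ => Or.inr hp.le)
    (fun z => Real.rpow_nonneg dist_nonneg p)
    (fun G hG => ProbabilityMeasure.le_liminf_measure_open_of_tendsto hlim hG)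
  simp_rw [← ENNReal.ofReal_rpow_of_nonneg dist_nonneg hp.le] at key
  rw [one_div, ENNReal.rpow_inv_le_iff hp]
  refine key.trans (Filter.liminf_le_of_frequently_le' (Filter.Frequently.of_forall fun n => ?_))
  have := (hcost (φ n)).le
  rwa [one_div, ENNReal.rpow_inv_le_iff hp] at this

lemma sq_wassersteinDist_le_of_tendsto {p : ℝ} (hp : 0 < p) {μs νs : ℕ → ProbabilityMeasure E}
    {μ ν : ProbabilityMeasure E} (hμ : Filter.Tendsto μs Filter.atTop (nhds μ))
    (hν : Filter.Tendsto νs Filter.atTop (nhds ν)) {a : ℕ → ℝ≥0∞} {b : ℝ≥0∞}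
    (ha : Filter.Tendsto a Filter.atTop (nhds b))
    (h : ∀ n, wassersteinDist p dist (μs n : Measure E) (νs n : Measure E) ^ 2 ≤ a n) :
    wassersteinDist p dist (μ : Measure E) (ν : Measure E) ^ 2 ≤ b := by
  refine le_of_forall_gt_imp_ge_of_dense fun c hc => ?_
  have hsq : ∀ x : ℝ≥0∞, x ^ 2 = x ^ (2 : ℝ) := fun x => by norm_cast
  obtain ⟨N, hN⟩ := Filter.eventually_atTop.1 (ha.eventually_lt_const hc)
  have hW := wassersteinDist_le_of_tendsto hp (b := c ^ (2 : ℝ)⁻¹)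
    (hμ.comp (Filter.tendsto_add_atTop_nat N)) (hν.comp (Filter.tendsto_add_atTop_nat N))
    fun n => by
      rw [ENNReal.lt_rpow_inv_iff two_pos, ← hsq]
      exact (h _).trans_lt (hN _ (Nat.le_add_left N n))
  rwa [ENNReal.le_rpow_inv_iff two_pos, ← hsq] at hW

end LowerSemicontinuity

section Densities

variable {E : Type*} [MeasurableSpace E]

/-- The probability measure with density proportional to `r` with respect to `μ`. -/
def normalizedDensity (μ : Measure E) (r : E → ℝ) : Measure E :=
  μ.withDensity fun x => ENNReal.ofReal (r x / ∫ y, r y ∂μ)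

/-- The relative entropy of `normalizedDensity μ r` with respect to `μ`. -/
def densityEntropy (μ : Measure E) (r : E → ℝ) : ℝ :=
  (∫ x, r x * Real.log (r x) ∂μ) / (∫ x, r x ∂μ) - Real.log (∫ x, r x ∂μ)

/-- The inequality `T_p(C)` for `μ`, tested against the normalized density `r`. -/
def TpDensity [PseudoMetricSpace E] (p C : ℝ) (μ : Measure E) (r : E → ℝ) : Prop :=
  wassersteinDist p dist μ (normalizedDensity μ r) ^ 2 ≤
    ENNReal.ofReal (2 * C) * ENNReal.ofReal (densityEntropy μ r)

variable {μ : Measure E} {r : E → ℝ}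

lemma isProbabilityMeasure_normalizedDensity (hr : 0 ≤ r) (hint : Integrable r μ)
    (hpos : 0 < ∫ x, r x ∂μ) : IsProbabilityMeasure (normalizedDensity μ r) := by
  constructor
  rw [normalizedDensity, withDensity_apply _ MeasurableSet.univ, Measure.restrict_univ,
    ← ofReal_integral_eq_lintegral_ofReal (hint.div_const _)
      (.of_forall fun x => div_nonneg (hr x) hpos.le), integral_div, div_self hpos.ne',
    ENNReal.ofReal_one]

lemma integral_normalizedDensity (hr : 0 ≤ r) (hm : Measurable r) (f : E → ℝ) :
    ∫ x, f x ∂normalizedDensity μ r = (∫ x, f x * r x ∂μ) / ∫ x, r x ∂μ := by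
  rw [normalizedDensity, integral_withDensity_eq_integral_toReal_smul (by fun_prop) (by simp),
    ← integral_div]
  refine integral_congr_ae (.of_forall fun x => ?_)
  simp only [smul_eq_mul]
  rw [ENNReal.toReal_ofReal (div_nonneg (hr x) (integral_nonneg hr))]
  ring

lemma norm_le_of_mem_Icc {c M x : ℝ} (hc : 0 ≤ c) (h : x ∈ Set.Icc c M) : ‖x‖ ≤ M := by
  rw [Real.norm_of_nonneg (hc.trans h.1)]; exact h.2

lemma integrable_of_mem_Icc [IsFiniteMeasure μ] {c M : ℝ} (hc : 0 ≤ c) (hm : Measurable r)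
    (hr : ∀ x, r x ∈ Set.Icc c M) : Integrable r μ :=
  .of_bound hm.aestronglyMeasurable M (.of_forall fun x => norm_le_of_mem_Icc hc (hr x))

lemma integral_pos_of_mem_Icc [IsProbabilityMeasure μ] {c M : ℝ} (hc : 0 < c) (hm : Measurable r)
    (hr : ∀ x, r x ∈ Set.Icc c M) : 0 < ∫ x, r x ∂μ := by
  refine hc.trans_le ?_
  simpa using integral_mono (integrable_const c) (integrable_of_mem_Icc (μ := μ) hc.le hm hr)
    fun x => (hr x).1

lemma exists_norm_mul_log_le (c M : ℝ) :
    ∃ B, ∀ x ∈ Set.Icc c M, ‖x * Real.log x‖ ≤ B :=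
  isCompact_Icc.exists_bound_of_continuousOn Real.continuous_mul_log.continuousOn

lemma relEntropy_normalizedDensity [IsProbabilityMeasure μ] {c M : ℝ} (hc : 0 < c)
    (hm : Measurable r) (hr : ∀ x, r x ∈ Set.Icc c M) :
    relEntropy (normalizedDensity μ r) μ = ENNReal.ofReal (densityEntropy μ r) := by
  have hr₀ : 0 ≤ r := fun x => hc.le.trans (hr x).1
  have hint := integrable_of_mem_Icc (μ := μ) hc.le hm hr
  have hpos := integral_pos_of_mem_Icc (μ := μ) hc hm hr
  have := isProbabilityMeasure_normalizedDensity hr₀ hint hpos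
  have hac : normalizedDensity μ r ≪ μ := withDensity_absolutelyContinuous _ _
  have hlog : (fun x => Real.log (((normalizedDensity μ r).rnDeriv μ x).toReal))
      =ᵐ[normalizedDensity μ r] fun x => Real.log (r x) - Real.log (∫ y, r y ∂μ) := by
    have hderiv := Measure.rnDeriv_withDensity μ
      (f := fun x => ENNReal.ofReal (r x / ∫ y, r y ∂μ)) (by fun_prop)
    filter_upwards [hac.ae_le hderiv] with x hx
    rw [normalizedDensity, hx, ENNReal.toReal_ofReal (div_nonneg (hr₀ x) hpos.le),
      Real.log_div (hc.trans_le (hr x).1).ne' hpos.ne']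
  have hlogint : Integrable (fun x => Real.log (r x)) (normalizedDensity μ r) := by
    refine .of_mem_Icc (Real.log c) (Real.log M) (by fun_prop) (.of_forall fun x => ?_)
    exact ⟨Real.log_le_log hc (hr x).1, Real.log_le_log (hc.trans_le (hr x).1) (hr x).2⟩
  rw [relEntropy, if_pos ⟨hac, (integrable_congr hlog).2 (hlogint.sub (integrable_const _))⟩,
    integral_congr_ae hlog, integral_sub hlogint (integrable_const _),
    integral_normalizedDensity hr₀ hm]
  simp [densityEntropy, mul_comm]

end Densities

/-- An integrable function is the almost everywhere limit of a sequence of continuous functions. -/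
lemma exists_seq_continuous_tendsto_ae {E : Type*} [MeasurableSpace E] [MetricSpace E]
    [BorelSpace E] (μ : Measure E) [IsFiniteMeasure μ] {r : E → ℝ}
    (hr : Integrable r μ) :
    ∃ g : ℕ → E → ℝ, (∀ n, Continuous (g n)) ∧
      ∀ᵐ x ∂μ, Filter.Tendsto (fun n => g n x) Filter.atTop (nhds (r x)) := by
  obtain ⟨ε, -, hε, hε₀⟩ := exists_seq_strictAnti_tendsto' (zero_lt_one (α := ℝ≥0∞))
  choose g hg hgi using fun n =>
    hr.exists_boundedContinuous_lintegral_sub_le (hε n).1.ne'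
  have hmeas : TendstoInMeasure μ (fun n => (g n : E → ℝ)) Filter.atTop r := by
    refine tendstoInMeasure_of_tendsto_eLpNorm one_ne_zero
      (fun n => (hgi n).aestronglyMeasurable) hr.aestronglyMeasurable ?_
    refine tendsto_of_tendsto_of_tendsto_of_le_of_le tendsto_const_nhds hε₀
      (fun _ => zero_le) fun n => ?_
    rw [eLpNorm_sub_comm, eLpNorm_one_eq_lintegral_enorm]
    exact hg n
  obtain ⟨ns, -, hns⟩ := hmeas.exists_seq_tendsto_ae
  exact ⟨fun n => g (ns n), fun n => (g (ns n)).continuous, hns⟩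

section Stability

variable {E : Type*} [MeasurableSpace E] [MetricSpace E] [CompleteSpace E]
  [SecondCountableTopology E] [BorelSpace E] {p C : ℝ}

lemma TpDensity.of_tendsto (hp : 0 < p) {μs : ℕ → ProbabilityMeasure E} {μ : ProbabilityMeasure E}
    (hμ : Filter.Tendsto μs Filter.atTop (nhds μ)) {rs : ℕ → E → ℝ} {r : E → ℝ}
    (hrs₀ : ∀ n, 0 ≤ rs n) (hr₀ : 0 ≤ r) (hrsm : ∀ n, Measurable (rs n)) (hrm : Measurable r)
    (hrsi : ∀ n, Integrable (rs n) (μs n : Measure E)) (hri : Integrable r (μ : Measure E))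
    (hrspos : ∀ n, 0 < ∫ x, rs n x ∂(μs n : Measure E)) (hrpos : 0 < ∫ x, r x ∂(μ : Measure E))
    (hlim : ∀ f : BoundedContinuousFunction E ℝ,
      Filter.Tendsto (fun n => ∫ x, f x * rs n x ∂(μs n : Measure E)) Filter.atTop
        (nhds (∫ x, f x * r x ∂(μ : Measure E))))
    (hent : Filter.Tendsto (fun n => ∫ x, rs n x * Real.log (rs n x) ∂(μs n : Measure E))
      Filter.atTop (nhds (∫ x, r x * Real.log (r x) ∂(μ : Measure E))))
    (h : ∀ n, TpDensity p C (μs n : Measure E) (rs n)) : TpDensity p C (μ : Measure E) r := by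
  have hZ : Filter.Tendsto (fun n => ∫ x, rs n x ∂(μs n : Measure E)) Filter.atTop
      (nhds (∫ x, r x ∂(μ : Measure E))) := by
    simpa using hlim (BoundedContinuousFunction.const E 1)
  let νs : ℕ → ProbabilityMeasure E := fun n =>
    ⟨_, isProbabilityMeasure_normalizedDensity (hrs₀ n) (hrsi n) (hrspos n)⟩
  let ν : ProbabilityMeasure E := ⟨_, isProbabilityMeasure_normalizedDensity hr₀ hri hrpos⟩
  have hν : Filter.Tendsto νs Filter.atTop (nhds ν) := by
    refine ProbabilityMeasure.tendsto_iff_forall_integral_tendsto.2 fun f => ?_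
    have hdiv := (hlim f).div hZ hrpos.ne'
    simp only [νs, ν, ProbabilityMeasure.coe_mk, integral_normalizedDensity (hrs₀ _) (hrsm _),
      integral_normalizedDensity hr₀ hrm]
    exact hdiv
  refine sq_wassersteinDist_le_of_tendsto hp hμ hν
    (ENNReal.Tendsto.const_mul (ENNReal.tendsto_ofReal ?_) (Or.inr ENNReal.ofReal_ne_top)) h
  have hZ₀ := hrpos.ne'
  exact (hent.div hZ hZ₀).sub (hZ.log hZ₀)

/-- Dominated convergence for the densities of a fixed reference measure. -/
lemma TpDensity.of_tendsto_ae (hp : 0 < p) {μ : ProbabilityMeasure E} {rs : ℕ → E → ℝ}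
    {r : E → ℝ} (hrs₀ : ∀ n, 0 ≤ rs n) (hr₀ : 0 ≤ r) (hrsm : ∀ n, Measurable (rs n))
    (hrm : Measurable r) (hrspos : ∀ n, 0 < ∫ x, rs n x ∂(μ : Measure E))
    (hrpos : 0 < ∫ x, r x ∂(μ : Measure E)) {F G : E → ℝ} (hF : Integrable F (μ : Measure E))
    (hG : Integrable G (μ : Measure E)) (hrsF : ∀ n x, rs n x ≤ F x) (hrF : ∀ x, r x ≤ F x)
    (hrsG : ∀ n x, ‖rs n x * Real.log (rs n x)‖ ≤ G x)
    (hlim : ∀ᵐ x ∂(μ : Measure E), Filter.Tendsto (fun n => rs n x) Filter.atTop (nhds (r x)))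
    (h : ∀ n, TpDensity p C (μ : Measure E) (rs n)) : TpDensity p C (μ : Measure E) r := by
  have integrable_of_le {s : E → ℝ} (hs : 0 ≤ s) (hsm : Measurable s) (hsF : ∀ x, s x ≤ F x) :
      Integrable s (μ : Measure E) :=
    hF.mono' hsm.aestronglyMeasurable (.of_forall fun x => by
      rw [Real.norm_of_nonneg (hs x)]; exact hsF x)
  refine .of_tendsto hp tendsto_const_nhds hrs₀ hr₀ hrsm hrm
    (fun n => integrable_of_le (hrs₀ n) (hrsm n) (hrsF n)) (integrable_of_le hr₀ hrm hrF)
    hrspos hrpos (fun f => ?_) ?_ h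
  · refine tendsto_integral_of_dominated_convergence (fun x => ‖f‖ * F x)
      (fun n => (f.continuous.measurable.mul (hrsm n)).aestronglyMeasurable) (hF.const_mul _)
      (fun n => .of_forall fun x => ?_) ?_
    · rw [norm_mul, Real.norm_of_nonneg (hrs₀ n x)]
      exact mul_le_mul (f.norm_coe_le_norm x) (hrsF n x) (hrs₀ n x) (norm_nonneg f)
    · filter_upwards [hlim] with x hx using hx.const_mul _
  · refine tendsto_integral_of_dominated_convergence G
      (fun n => ((hrsm n).mul (hrsm n).log).aestronglyMeasurable) hG
      (fun n => .of_forall (hrsG n)) ?_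
    filter_upwards [hlim] with x hx
    exact (Real.continuous_mul_log.tendsto (r x)).comp hx

variable {μs : ℕ → ProbabilityMeasure E} {μ : ProbabilityMeasure E}

lemma tpDensity_of_continuous (hp : 0 < p) (hT : ∀ n, TpIneq p dist C (μs n : Measure E))
    (hμ : Filter.Tendsto μs Filter.atTop (nhds μ)) {r : E → ℝ} {c M : ℝ} (hc : 0 < c)
    (hcont : Continuous r) (hr : ∀ x, r x ∈ Set.Icc c M) : TpDensity p C (μ : Measure E) r := by
  have hm := hcont.measurable
  have hr₀ : 0 ≤ r := fun x => hc.le.trans (hr x).1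
  have hi (m : ProbabilityMeasure E) : Integrable r (m : Measure E) :=
    integrable_of_mem_Icc hc.le hm hr
  have hpos (m : ProbabilityMeasure E) : 0 < ∫ x, r x ∂(m : Measure E) :=
    integral_pos_of_mem_Icc hc hm hr
  have hweak := ProbabilityMeasure.tendsto_iff_forall_integral_tendsto.1 hμ
  obtain ⟨B, hB⟩ := exists_norm_mul_log_le c M
  refine .of_tendsto hp hμ (fun _ => hr₀) hr₀ (fun _ => hm) hm (fun n => hi (μs n)) (hi μ)
    (fun n => hpos (μs n)) (hpos μ)
    (fun f => hweak (f * .ofNormedAddCommGroup r hcont M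
      fun x => norm_le_of_mem_Icc hc.le (hr x)))
    (hweak (.ofNormedAddCommGroup (fun x => r x * Real.log (r x))
      (Real.continuous_mul_log.comp hcont) B fun x => hB _ (hr x))) fun n => ?_
  rw [TpDensity, ← relEntropy_normalizedDensity hc hm hr]
  exact hT n _ (isProbabilityMeasure_normalizedDensity hr₀ (hi (μs n)) (hpos (μs n)))

lemma tpDensity_of_measurable (hp : 0 < p) (hT : ∀ n, TpIneq p dist C (μs n : Measure E))
    (hμ : Filter.Tendsto μs Filter.atTop (nhds μ)) {r : E → ℝ} {c M : ℝ} (hc : 0 < c)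
    (hm : Measurable r) (hr : ∀ x, r x ∈ Set.Icc c M) : TpDensity p C (μ : Measure E) r := by
  obtain ⟨g, hg, hgr⟩ := exists_seq_continuous_tendsto_ae (μ : Measure E)
    (integrable_of_mem_Icc hc.le hm hr)
  obtain ⟨B, hB⟩ := exists_norm_mul_log_le c M
  have hcM (x : E) : c ≤ M := (hr x).1.trans (hr x).2
  have hmem (n : ℕ) (x : E) : max c (min M (g n x)) ∈ Set.Icc c M :=
    ⟨le_max_left _ _, max_le (hcM x) (min_le_left _ _)⟩
  have hcont (n : ℕ) : Continuous fun x => max c (min M (g n x)) :=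
    continuous_const.max (continuous_const.min (hg n))
  refine .of_tendsto_ae hp (rs := fun n x => max c (min M (g n x))) (F := fun _ => M)
    (G := fun _ => B) (fun n x => hc.le.trans (hmem n x).1) (fun x => hc.le.trans (hr x).1)
    (fun n => (hcont n).measurable) hm
    (fun n => integral_pos_of_mem_Icc hc (hcont n).measurable (hmem n))
    (integral_pos_of_mem_Icc hc hm hr) (integrable_const _) (integrable_const _)
    (fun n x => (hmem n x).2) (fun x => (hr x).2) (fun n x => hB _ (hmem n x)) ?_
    fun n => tpDensity_of_continuous hp hT hμ hc (hcont n) (hmem n)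
  filter_upwards [hgr] with x hx
  have := tendsto_const_nhds (x := c) |>.max (tendsto_const_nhds (x := M) |>.min hx)
  rwa [min_eq_right (hr x).2, max_eq_right (hr x).1] at this

lemma norm_mul_log_truncate_le {x a b : ℝ} (hx : 0 ≤ x) (ha₀ : 0 ≤ a) (ha : a ≤ 1) (hb : 1 ≤ b) :
    ‖max a (min b x) * Real.log (max a (min b x))‖ ≤ ‖x * Real.log x‖ + 1 := by
  have hsmall {y : ℝ} (h₀ : 0 ≤ y) (h₁ : y ≤ 1) : ‖y * Real.log y‖ ≤ 1 := by
    rcases h₀.eq_or_lt with rfl | h₀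
    · simp
    · rw [mul_comm]; exact (Real.abs_log_mul_self_lt y h₀ h₁).le
  rcases le_total x a with hxa | hxa
  · rw [max_eq_left ((min_le_right _ _).trans hxa)]
    exact (hsmall ha₀ ha).trans (le_add_of_nonneg_left (norm_nonneg _))
  rcases le_total x b with hxb | hxb
  · rw [min_eq_right hxb, max_eq_right hxa]
    exact le_add_of_nonneg_right zero_le_one
  · rw [min_eq_left hxb, max_eq_right (ha.trans hb)]
    have hlog := Real.log_nonneg hb
    have hle := Real.log_le_log (zero_lt_one.trans_le hb) hxb
    rw [Real.norm_of_nonneg (by positivity), Real.norm_of_nonneg (mul_nonneg hx (hlog.trans hle))]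
    exact (mul_le_mul hxb hle hlog hx).trans (le_add_of_nonneg_right zero_le_one)

lemma tpDensity_of_integrable (hp : 0 < p) (hT : ∀ n, TpIneq p dist C (μs n : Measure E))
    (hμ : Filter.Tendsto μs Filter.atTop (nhds μ)) {r : E → ℝ} (hm : Measurable r) (hr₀ : 0 ≤ r)
    (hi : Integrable r (μ : Measure E)) (hpos : 0 < ∫ x, r x ∂(μ : Measure E))
    (hent : Integrable (fun x => r x * Real.log (r x)) (μ : Measure E)) :
    TpDensity p C (μ : Measure E) r := by
  let a : ℕ → ℝ := fun n => 1 / ((n : ℝ) + 1)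
  let b : ℕ → ℝ := fun n => (n : ℝ) + 1
  have ha₀ (n : ℕ) : 0 < a n := Nat.one_div_pos_of_nat
  have hb (n : ℕ) : 1 ≤ b n := le_add_of_nonneg_left n.cast_nonneg
  have ha (n : ℕ) : a n ≤ 1 := div_le_one_of_le₀ (hb n) (zero_le_one.trans (hb n))
  have hmem (n : ℕ) (x : E) : max (a n) (min (b n) (r x)) ∈ Set.Icc (a n) (b n) :=
    ⟨le_max_left _ _, max_le ((ha n).trans (hb n)) (min_le_left _ _)⟩
  have hmeas (n : ℕ) : Measurable fun x => max (a n) (min (b n) (r x)) := by fun_prop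
  refine .of_tendsto_ae hp (rs := fun n x => max (a n) (min (b n) (r x)))
    (F := fun x => r x + 1) (G := fun x => ‖r x * Real.log (r x)‖ + 1)
    (fun n x => (ha₀ n).le.trans (hmem n x).1) hr₀ hmeas hm
    (fun n => integral_pos_of_mem_Icc (ha₀ n) (hmeas n) (hmem n)) hpos
    (hi.add (integrable_const _)) (hent.norm.add (integrable_const _))
    (fun n x => max_le ((ha n).trans (le_add_of_nonneg_left (hr₀ x)))
      ((min_le_right _ _).trans (le_add_of_nonneg_right zero_le_one)))
    (fun x => le_add_of_nonneg_right zero_le_one)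
    (fun n x => norm_mul_log_truncate_le (hr₀ x) (ha₀ n).le (ha n) (hb n))
    (.of_forall fun x => ?_)
    fun n => tpDensity_of_measurable hp hT hμ (ha₀ n) (hmeas n) (hmem n)
  have hmin : Filter.Tendsto (fun n => min (b n) (r x)) Filter.atTop (nhds (r x)) := by
    refine tendsto_const_nhds.congr' ?_
    filter_upwards [Filter.eventually_ge_atTop ⌈r x⌉₊] with n hn
    exact (min_eq_right ((Nat.ceil_le.1 hn).trans (le_add_of_nonneg_right zero_le_one))).symm
  have := (tendsto_one_div_add_atTop_nhds_zero_nat (𝕜 := ℝ)).max hmin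
  rwa [max_eq_right (show (0 : ℝ) ≤ r x from hr₀ x)] at this

end Stability

/-- **Lemma 2.2: stability of `T_p(C)` under weak convergence** on a Polish space. -/
theorem Tp_weak_limit
    {E : Type*} [MeasurableSpace E] [MetricSpace E] [CompleteSpace E]
    [SecondCountableTopology E] [BorelSpace E]
    (p C : ℝ) (hp : 1 ≤ p)
    (μs : ℕ → ProbabilityMeasure E) (μ : ProbabilityMeasure E)
    (hT : ∀ n, TpIneq p dist C (μs n : Measure E))
    (hconv : Filter.Tendsto μs Filter.atTop (nhds μ)) :
    TpIneq p dist C (μ : Measure E) := by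
  intro ν hν
  have hp₀ : 0 < p := zero_lt_one.trans_le hp
  by_cases hH : ν ≪ (μ : Measure E) ∧
      Integrable (fun x => Real.log ((ν.rnDeriv (μ : Measure E) x).toReal)) ν
  · obtain ⟨hac, hlog⟩ := hH
    set r : E → ℝ := fun x => (ν.rnDeriv (μ : Measure E) x).toReal with hr
    have hone : ∫ x, r x ∂(μ : Measure E) = 1 := by
      simp [hr, Measure.integral_toReal_rnDeriv hac]
    have hdens : normalizedDensity (μ : Measure E) r = ν := by
      rw [normalizedDensity, hone]
      simp only [div_one, hr]
      conv_rhs => rw [← Measure.withDensity_rnDeriv_eq ν _ hac]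
      refine withDensity_congr_ae ?_
      filter_upwards [Measure.rnDeriv_lt_top ν (μ : Measure E)] with x hx
      exact ENNReal.ofReal_toReal hx.ne
    have key := tpDensity_of_integrable hp₀ hT hconv (r := r)
      (Measure.measurable_rnDeriv _ _).ennreal_toReal (fun _ => ENNReal.toReal_nonneg)
      Measure.integrable_toReal_rnDeriv (by rw [hone]; exact one_pos)
      ((integrable_rnDeriv_smul_iff hac).2 hlog)
    have hent : densityEntropy (μ : Measure E) r = ∫ x, Real.log (r x) ∂ν := by
      rw [densityEntropy, hone, Real.log_one, div_one, sub_zero]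
      exact integral_rnDeriv_smul hac
    rw [TpDensity, hdens, hent] at key
    rwa [relEntropy, if_pos ⟨hac, hlog⟩]
  · let ν' : ProbabilityMeasure E := ⟨ν, hν⟩
    rw [relEntropy, if_neg hH]
    refine sq_wassersteinDist_le_of_tendsto hp₀ hconv
      (tendsto_const_nhds (x := ν')) tendsto_const_nhds fun n => ?_
    exact (hT n ν hν).trans (mul_le_mul_right le_top _)

end
end

section
/- (Theorem 2.3: Gaussian-tail characterization of T_1.) A probability measure μ on (E,d) satisfies the T_1(C) inequality for some constant C > 0 if and only if there exists δ > 0 such that ∬_{E×E} exp(δ·d(x,y)²) dμ(x) dμ(y) < +∞. In the latter case one may take C ≤ (2/δ)·sup_{k≥1} ( ((k!)²/(2k)!) · ∬ exp(δ d(x,y)²) dμ(x) dμ(y) )^{1/k}, which is finite. -/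
open MeasureTheory ProbabilityTheory ENNReal

noncomputable section

open InformationTheory

lemma sq_le_two_mul_klFun_one_sub {b : ℝ} (hb0 : 0 ≤ b) (hb1 : b ≤ 1) :
    b ^ 2 ≤ 2 * klFun (1 - b) := by
  rcases hb1.eq_or_lt with rfl | hb1
  · norm_num [klFun]
  have hx : 0 < 1 - b := by linarith
  have h1 : 0 ≤ Real.log (1 - b)⁻¹ := Real.log_nonneg ((one_le_inv₀ hx).2 (by linarith))
  have h2 := Real.self_le_sinh_iff.2 h1
  rw [Real.sinh_log (inv_pos.2 hx), inv_inv, Real.log_inv] at h2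
  have h3 := mul_le_mul_of_nonneg_left h2 hx.le
  have h4 : (1 - b) * (((1 - b)⁻¹ - (1 - b)) / 2) = (1 - (1 - b) ^ 2) / 2 := by
    field_simp
  rw [h4] at h3
  rw [klFun_apply]
  nlinarith

lemma mul_mul_log_div_le_two_mul_klFun_one_sub {b T : ℝ} (hb0 : 0 < b) (hb1 : b ≤ 1)
    (hT : 0 < T) : T * (b * Real.log (b / T)) ≤ 2 * klFun (1 - b) := by
  refine le_trans ?_ (sq_le_two_mul_klFun_one_sub hb0.le hb1)
  have h1 := Real.log_le_sub_one_of_pos (div_pos hb0 hT)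
  have h2 := mul_le_mul_of_nonneg_left h1 (mul_pos hT hb0).le
  have h3 : T * b * (b / T - 1) = b ^ 2 - T * b := by field_simp
  nlinarith [mul_pos hT hb0]

lemma mul_mul_log_div_le_two_mul_klFun_one_add {a T : ℝ} (ha : 0 < a) (hT : 0 < T)
    (hT1 : T ≤ 1) : T * (a * Real.log (a / T)) ≤ 2 * klFun (1 + a) := by
  have h1a : 0 < 1 + a := by linarith
  have h1 := Real.log_le_sub_one_of_pos (div_pos ha (mul_pos hT h1a))
  have h2 : Real.log (a / (T * (1 + a))) = Real.log (a / T) - Real.log (1 + a) := by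
    rw [← div_div, Real.log_div (div_pos ha hT).ne' h1a.ne']
  rw [h2] at h1
  have h3 : T * Real.log (a / T) ≤ a / (1 + a) + T * (Real.log (1 + a) - 1) := by
    have := mul_le_mul_of_nonneg_left h1 hT.le
    have h4 : T * (a / (T * (1 + a)) - 1) = a / (1 + a) - T := by field_simp
    linarith
  have hlog := Real.le_log_one_add_of_nonneg ha.le
  rw [div_le_iff₀ (by linarith)] at hlog
  rw [klFun_apply]
  set L := Real.log (1 + a)
  have h5 : T * (a * Real.log (a / T)) ≤ a * (a / (1 + a) + T * (L - 1)) := by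
    nlinarith
  refine h5.trans ?_
  have h6 : a / (1 + a) = 1 - 1 / (1 + a) := by field_simp; ring
  have h7 : a ^ 2 / (1 + a) = a - 1 + 1 / (1 + a) := by field_simp; ring
  rcases le_total 1 L with hL | hL
  · have : T * (L - 1) ≤ L - 1 := by nlinarith
    have : a * (T * (L - 1)) ≤ a * (L - 1) := mul_le_mul_of_nonneg_left this ha.le
    have : a * (a / (1 + a)) ≤ a := by
      rw [h6]; nlinarith [one_div_pos.2 h1a, mul_pos ha (one_div_pos.2 h1a)]
    nlinarith
  · have : a * (T * (L - 1)) ≤ 0 :=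
      mul_nonpos_of_nonneg_of_nonpos ha.le (mul_nonpos_of_nonneg_of_nonpos hT.le (by linarith))
    have h8 : a * (a / (1 + a)) ≤ 2 * ((1 + a) * L) - 2 * a := by
      rw [mul_div_assoc', div_le_iff₀ h1a]
      have h9 : 2 * a * (1 + a) ^ 2 ≤ L * (a + 2) * (1 + a) ^ 2 := by gcongr
      by_contra! h
      nlinarith [mul_lt_mul_of_pos_right h (by linarith : 0 < a + 2), pow_pos ha 3]
    linarith

lemma mul_mul_add_le_klFun_add_exp {a b T : ℝ} (ha : 0 ≤ a) (hb0 : 0 ≤ b) (hb1 : b ≤ 1)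
    (hT : 0 < T) (hT1 : T ≤ 1) (s : ℝ) :
    b * a * s + b * a ≤
      2 / T * (b * klFun (1 + a)) + 2 / T * (a * klFun (1 - b)) + T ^ 2 * Real.exp s := by
  have hk1 : 0 ≤ klFun (1 + a) := klFun_nonneg (by linarith)
  have hk2 : 0 ≤ klFun (1 - b) := klFun_nonneg (by linarith)
  have hR : 0 ≤ 2 / T * (b * klFun (1 + a)) + 2 / T * (a * klFun (1 - b)) +
      T ^ 2 * Real.exp s := by positivity
  rcases ha.eq_or_lt with rfl | ha
  · simpa only [mul_zero, zero_mul, add_zero] using hR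
  rcases hb0.eq_or_lt with rfl | hb0
  · simpa only [mul_zero, zero_mul, add_zero] using hR
  have h1 := mul_mul_log_div_le_two_mul_klFun_one_add ha hT hT1
  have h2 := mul_mul_log_div_le_two_mul_klFun_one_sub hb0 hb1 hT
  have h3 : a * Real.log (a / T) ≤ 2 / T * klFun (1 + a) := by
    rw [div_mul_eq_mul_div, le_div_iff₀ hT]; linarith
  have h4 : b * Real.log (b / T) ≤ 2 / T * klFun (1 - b) := by
    rw [div_mul_eq_mul_div, le_div_iff₀ hT]; linarith
  have h5 := Real.add_one_le_exp (s - (Real.log (a / T) + Real.log (b / T)))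
  rw [Real.exp_sub, Real.exp_add, Real.exp_log (by positivity), Real.exp_log (by positivity)] at h5
  have h6 := mul_le_mul_of_nonneg_left h5 (mul_pos hb0 ha).le
  have h7 : b * a * (Real.exp s / (a / T * (b / T))) = T ^ 2 * Real.exp s := by
    field_simp
  rw [h7] at h6
  nlinarith [mul_le_mul_of_nonneg_left h3 hb0.le, mul_le_mul_of_nonneg_left h4 ha.le]

lemma relEntropy_eq_klDiv {E : Type*} [MeasurableSpace E] (ν μ : Measure E)
    [IsProbabilityMeasure ν] [IsProbabilityMeasure μ] : relEntropy ν μ = klDiv ν μ := by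
  rw [relEntropy, klDiv_def]
  simp only [llr_def, probReal_univ, add_sub_cancel_right]
  congr

lemma isCoupling_diag_add_prod {E : Type*} [MeasurableSpace E] (κ α β : Measure E)
    [SFinite α] [SFinite β] {T : ℝ≥0∞} (hα : α Set.univ = T) (hβ : β Set.univ = T)
    (hT0 : T ≠ 0) (hT : T ≠ ∞) :
    IsCoupling (κ.map (fun x => (x, x)) + T⁻¹ • α.prod β) (κ + α) (κ + β) := by
  have hdiag : Measurable (fun x : E => (x, x)) := by fun_prop
  constructor
  · rw [Measure.map_add _ _ measurable_fst, Measure.map_map measurable_fst hdiag,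
      Measure.map_smul, Measure.map_fst_prod, hβ, smul_smul, ENNReal.inv_mul_cancel hT0 hT, one_smul]
    congr 1
    exact Measure.map_id
  · rw [Measure.map_add _ _ measurable_snd, Measure.map_map measurable_snd hdiag,
      Measure.map_smul, Measure.map_snd_prod, hα, smul_smul, ENNReal.inv_mul_cancel hT0 hT, one_smul]
    congr 1
    exact Measure.map_id

lemma sq_lintegral_le_measure_univ_mul {α : Type*} [MeasurableSpace α] (ρ : Measure α)
    {f : α → ℝ≥0∞} (hf : Measurable f) :
    (∫⁻ x, f x ∂ρ) ^ 2 ≤ ρ Set.univ * ∫⁻ x, f x ^ 2 ∂ρ := by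
  have h := ENNReal.lintegral_mul_le_Lp_mul_Lq ρ Real.HolderConjugate.two_two
    (f := f) (g := fun _ => 1) hf.aemeasurable aemeasurable_const
  simp only [Pi.mul_apply, mul_one, ENNReal.one_rpow, lintegral_const, one_mul] at h
  calc (∫⁻ x, f x ∂ρ) ^ 2
      ≤ ((∫⁻ x, f x ^ (2 : ℝ) ∂ρ) ^ (1 / 2 : ℝ) * ρ Set.univ ^ (1 / 2 : ℝ)) ^ 2 := by gcongr
    _ = _ := by
      rw [mul_pow, ← ENNReal.rpow_mul_natCast, ← ENNReal.rpow_mul_natCast, mul_comm]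
      norm_num

lemma one_le_lintegral_exp {E : Type*} [MeasurableSpace E] (d : E → E → ℝ)
    (μ : Measure E) [IsProbabilityMeasure μ] {δ : ℝ} (hδ : 0 ≤ δ) :
    1 ≤ ∫⁻ x, ∫⁻ y, ENNReal.ofReal (Real.exp (δ * d x y ^ 2)) ∂μ ∂μ := by
  calc (1 : ℝ≥0∞) = ∫⁻ _, ∫⁻ _, 1 ∂μ ∂μ := by simp
    _ ≤ _ := lintegral_mono fun x => lintegral_mono fun y => by
      rw [ENNReal.one_le_ofReal]
      exact Real.one_le_exp (by positivity)

lemma mul_lintegral_sq_cost_le {E : Type*} [MeasurableSpace E] {d : E → E → ℝ}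
    (hd : Measurable fun q : E × E => d q.1 q.2) (μ : Measure E) [IsProbabilityMeasure μ]
    {g : E → ℝ} (hg : Measurable g) (hg0 : ∀ x, 0 ≤ g x) {δ : ℝ} (hδ : 0 ≤ δ)
    {T : ℝ≥0∞} (hT0 : T ≠ 0) (hT1 : T ≤ 1)
    (hA : ∫⁻ x, ENNReal.ofReal (g x - 1) ∂μ = T) (hB : ∫⁻ x, ENNReal.ofReal (1 - g x) ∂μ = T) :
    ENNReal.ofReal δ * ∫⁻ z, ENNReal.ofReal (d z.1 z.2) ^ 2
        ∂(μ.withDensity fun x => ENNReal.ofReal (1 - g x)).prod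
          (μ.withDensity fun x => ENNReal.ofReal (g x - 1)) ≤
      2 * (∫⁻ x, ENNReal.ofReal (klFun (g x)) ∂μ) *
        ∫⁻ x, ∫⁻ y, ENNReal.ofReal (Real.exp (δ * d x y ^ 2)) ∂μ ∂μ := by
  set a : E → ℝ := fun x => max (g x - 1) 0 with ha
  set b : E → ℝ := fun x => max (1 - g x) 0 with hb
  have ha0 : ∀ x, 0 ≤ a x := fun x => le_max_right _ _
  have hb0 : ∀ x, 0 ≤ b x := fun x => le_max_right _ _
  have hb1 : ∀ x, b x ≤ 1 := fun x => max_le (by linarith [hg0 x]) zero_le_one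
  have ham : Measurable a := by fun_prop
  have hbm : Measurable b := by fun_prop
  have hae : (fun x => ENNReal.ofReal (g x - 1)) = fun x => ENNReal.ofReal (a x) := by
    ext x; simp [ha]
  have hbe : (fun x => ENNReal.ofReal (1 - g x)) = fun x => ENNReal.ofReal (b x) := by
    ext x; simp [hb]
  rw [hae] at hA ⊢
  rw [hbe] at hB ⊢
  have hTt : T ≠ ∞ := (hT1.trans_lt ENNReal.one_lt_top).ne
  set t := T.toReal with ht
  have hTt' : T = ENNReal.ofReal t := (ENNReal.ofReal_toReal hTt).symm
  have ht0 : 0 < t := ENNReal.toReal_pos hT0 hTt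
  have ht1 : t ≤ 1 := ENNReal.toReal_le_of_le_ofReal zero_le_one (by simpa using hT1)
  have hka : ∀ x, 0 ≤ klFun (1 + a x) := fun x => klFun_nonneg (by linarith [ha0 x])
  have hkb : ∀ x, 0 ≤ klFun (1 - b x) := fun x => klFun_nonneg (by linarith [hb1 x])
  have hkam : Measurable fun x => klFun (1 + a x) :=
    measurable_klFun.comp (by fun_prop)
  have hkbm : Measurable fun x => klFun (1 - b x) :=
    measurable_klFun.comp (by fun_prop)
  have hexp : Measurable fun z : E × E => ENNReal.ofReal (Real.exp (δ * d z.1 z.2 ^ 2)) := by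
    fun_prop
  set Ha := ∫⁻ x, ENNReal.ofReal (klFun (1 + a x)) ∂μ with hHa
  set Hb := ∫⁻ x, ENNReal.ofReal (klFun (1 - b x)) ∂μ with hHb
  have hsplit : Ha + Hb = ∫⁻ x, ENNReal.ofReal (klFun (g x)) ∂μ := by
    rw [hHa, hHb, ← lintegral_add_left hkam.ennreal_ofReal]
    refine lintegral_congr fun x => ?_
    rcases le_total (g x) 1 with h | h
    · simp [ha, hb, h, klFun_one]
    · simp [ha, hb, h, klFun_one]
  set M := ∫⁻ x, ∫⁻ y, ENNReal.ofReal (Real.exp (δ * d x y ^ 2)) ∂μ ∂μ with hMdef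
  have hMprod : M = ∫⁻ z, ENNReal.ofReal (Real.exp (δ * d z.1 z.2 ^ 2)) ∂μ.prod μ :=
    (lintegral_prod _ hexp.aemeasurable).symm
  have hM1 : 1 ≤ M := one_le_lintegral_exp d μ hδ
  set J := ∫⁻ z, ENNReal.ofReal (d z.1 z.2) ^ 2
    ∂(μ.withDensity fun x => ENNReal.ofReal (b x)).prod
      (μ.withDensity fun x => ENNReal.ofReal (a x)) with hJ
  have hJ' : J = ∫⁻ z, ENNReal.ofReal (b z.1) * ENNReal.ofReal (a z.2) *
      ENNReal.ofReal (d z.1 z.2) ^ 2 ∂μ.prod μ := by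
    rw [hJ, prod_withDensity (by fun_prop) (by fun_prop),
      lintegral_withDensity_eq_lintegral_mul _ (by fun_prop) (by fun_prop)]
    rfl
  have hTsq : T ^ 2 ≤ 2 * Hb := by
    rw [← hB]
    calc (∫⁻ x, ENNReal.ofReal (b x) ∂μ) ^ 2
        ≤ μ Set.univ * ∫⁻ x, ENNReal.ofReal (b x) ^ 2 ∂μ :=
          sq_lintegral_le_measure_univ_mul μ hbm.ennreal_ofReal
      _ ≤ ∫⁻ x, 2 * ENNReal.ofReal (klFun (1 - b x)) ∂μ := by
        rw [measure_univ, one_mul]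
        refine lintegral_mono fun x => ?_
        rw [← ENNReal.ofReal_pow (hb0 x), ← ENNReal.ofReal_ofNat 2,
          ← ENNReal.ofReal_mul zero_le_two]
        exact ENNReal.ofReal_le_ofReal (sq_le_two_mul_klFun_one_sub (hb0 x) (hb1 x))
      _ = 2 * Hb := lintegral_const_mul _ hkbm.ennreal_ofReal
  have hpt : ∀ z : E × E,
      ENNReal.ofReal δ * (ENNReal.ofReal (b z.1) * ENNReal.ofReal (a z.2) *
          ENNReal.ofReal (d z.1 z.2) ^ 2) + ENNReal.ofReal (b z.1) * ENNReal.ofReal (a z.2) ≤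
        2 / T * (ENNReal.ofReal (b z.1) * ENNReal.ofReal (klFun (1 + a z.2))) +
        2 / T * (ENNReal.ofReal (klFun (1 - b z.1)) * ENNReal.ofReal (a z.2)) +
        T ^ 2 * ENNReal.ofReal (Real.exp (δ * d z.1 z.2 ^ 2)) := by
    intro z
    have hsq : ENNReal.ofReal (d z.1 z.2) ^ 2 ≤ ENNReal.ofReal (d z.1 z.2 ^ 2) := by
      rcases le_total 0 (d z.1 z.2) with h | h
      · rw [ENNReal.ofReal_pow h]
      · simp [ENNReal.ofReal_of_nonpos h]
    have h2T : 2 / T = ENNReal.ofReal (2 / t) := by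
      rw [ENNReal.ofReal_div_of_pos ht0, ← hTt', ENNReal.ofReal_ofNat]
    have hreal := mul_mul_add_le_klFun_add_exp (ha0 z.2) (hb0 z.1) (hb1 z.1) ht0 ht1
      (δ * d z.1 z.2 ^ 2)
    have ha' := ha0 z.2
    have hb' := hb0 z.1
    have hka' := hka z.2
    have hkb' := hkb z.1
    refine le_trans (add_le_add_left (mul_le_mul_right (mul_le_mul_right hsq _) _) _) ?_
    rw [h2T, hTt', ← ENNReal.ofReal_pow ht0.le]
    rw [← ENNReal.ofReal_mul hb', ← ENNReal.ofReal_mul (by positivity),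
      ← ENNReal.ofReal_mul (by positivity), ← ENNReal.ofReal_add (by positivity) (by positivity),
      ← ENNReal.ofReal_mul hb', ← ENNReal.ofReal_mul (by positivity),
      ← ENNReal.ofReal_mul hkb', ← ENNReal.ofReal_mul (by positivity),
      ← ENNReal.ofReal_mul (by positivity), ← ENNReal.ofReal_add (by positivity) (by positivity),
      ← ENNReal.ofReal_add (by positivity) (by positivity)]
    refine ENNReal.ofReal_le_ofReal ?_
    linarith
  have hint : ENNReal.ofReal δ * J + T ^ 2 ≤ 2 * (Ha + Hb) + T ^ 2 * M := by
    have h := lintegral_mono (μ := μ.prod μ) hpt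
    rw [lintegral_add_right _ (by fun_prop), lintegral_const_mul _ (by fun_prop), ← hJ',
      lintegral_prod_mul hbm.ennreal_ofReal.aemeasurable ham.ennreal_ofReal.aemeasurable,
      lintegral_add_right _ (by fun_prop), lintegral_add_right _ (by fun_prop),
      lintegral_const_mul _ (by fun_prop), lintegral_const_mul _ (by fun_prop),
      lintegral_const_mul _ (by fun_prop), ← hMprod,
      lintegral_prod_mul hbm.ennreal_ofReal.aemeasurable hkam.ennreal_ofReal.aemeasurable,
      lintegral_prod_mul hkbm.ennreal_ofReal.aemeasurable ham.ennreal_ofReal.aemeasurable,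
      hA, hB, ← sq, ← hHa, ← hHb] at h
    refine h.trans (le_of_eq ?_)
    rw [← mul_assoc, mul_comm Hb T, ← mul_assoc, ENNReal.div_mul_cancel hT0 hTt, mul_add]
  rw [← hsplit]
  obtain ⟨M', hM'⟩ := exists_add_of_le hM1
  have hfin : T ^ 2 ≠ ∞ := ENNReal.pow_ne_top hTt
  refine (ENNReal.add_le_add_iff_right hfin).1 (hint.trans ?_)
  rw [hM']
  calc 2 * (Ha + Hb) + T ^ 2 * (1 + M')
      = 2 * (Ha + Hb) + T ^ 2 * M' + T ^ 2 := by ring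
    _ ≤ 2 * (Ha + Hb) + 2 * (Ha + Hb) * M' + T ^ 2 := by
      gcongr
      exact hTsq.trans (by gcongr; exact le_add_self)
    _ = 2 * (Ha + Hb) * (1 + M') + T ^ 2 := by ring

lemma mul_wassersteinDist_one_sq_le {E : Type*} [MeasurableSpace E] {d : E → E → ℝ}
    (hd : Measurable fun q : E × E => d q.1 q.2) (hd0 : ∀ x, d x x = 0)
    (μ : Measure E) [IsProbabilityMeasure μ] {g : E → ℝ} (hg : Measurable g)
    (hg0 : ∀ x, 0 ≤ g x) (hg1 : ∫⁻ x, ENNReal.ofReal (g x) ∂μ = 1) {δ : ℝ} (hδ : 0 ≤ δ) :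
    ENNReal.ofReal δ * wassersteinDist 1 d μ (μ.withDensity fun x => ENNReal.ofReal (g x)) ^ 2 ≤
      2 * (∫⁻ x, ENNReal.ofReal (klFun (g x)) ∂μ) *
        ∫⁻ x, ∫⁻ y, ENNReal.ofReal (Real.exp (δ * d x y ^ 2)) ∂μ ∂μ := by
  have hdiag : Measurable (fun x : E => (x, x)) := by fun_prop
  have hdm : Measurable fun q : E × E => ENNReal.ofReal (d q.1 q.2) := hd.ennreal_ofReal
  set α := μ.withDensity fun x => ENNReal.ofReal (1 - g x) with hα
  set β := μ.withDensity fun x => ENNReal.ofReal (g x - 1) with hβ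
  set κ := μ.withDensity fun x => ENNReal.ofReal (min (g x) 1) with hκ
  have hκα : κ + α = μ := by
    rw [hκ, hα, ← withDensity_add_left (by fun_prop)]
    convert withDensity_one
    ext x
    rcases le_total (g x) 1 with h | h
    · simp [h, ← ENNReal.ofReal_add (hg0 x) (sub_nonneg.2 h)]
    · simp [h]
  have hκβ : κ + β = μ.withDensity fun x => ENNReal.ofReal (g x) := by
    rw [hκ, hβ, ← withDensity_add_left (by fun_prop)]
    congr 1
    ext x
    rcases le_total (g x) 1 with h | h
    · simp [h]
    · rw [Pi.add_apply, min_eq_right h, ← ENNReal.ofReal_add zero_le_one (sub_nonneg.2 h)]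
      simp
  have hα1 : κ Set.univ + α Set.univ = 1 := by
    rw [← Measure.add_apply, hκα, measure_univ]
  have hβ1 : κ Set.univ + β Set.univ = 1 := by
    rw [← Measure.add_apply, hκβ, withDensity_apply _ MeasurableSet.univ, setLIntegral_univ, hg1]
  have hκfin : κ Set.univ ≠ ∞ := ne_top_of_le_ne_top ENNReal.one_ne_top (hα1 ▸ le_self_add)
  have hαβ : β Set.univ = α Set.univ :=
    (ENNReal.add_right_inj hκfin).1 (hβ1.trans hα1.symm)
  have hT1 : α Set.univ ≤ 1 := hα1 ▸ le_add_self
  have hTt : α Set.univ ≠ ∞ := (hT1.trans_lt ENNReal.one_lt_top).ne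
  have hcdiag : ∫⁻ z, ENNReal.ofReal (d z.1 z.2) ∂κ.map (fun x => (x, x)) = 0 := by
    rw [lintegral_map hdm hdiag]
    simp [hd0]
  by_cases hT0 : α Set.univ = 0
  · have hα0 : α = 0 := Measure.measure_univ_eq_zero.1 hT0
    have hβ0 : β = 0 := Measure.measure_univ_eq_zero.1 (hαβ.trans hT0)
    rw [hα0, add_zero] at hκα
    rw [hβ0, add_zero] at hκβ
    have hπ : IsCoupling (κ.map fun x => (x, x)) μ
        (μ.withDensity fun x => ENNReal.ofReal (g x)) := by
      constructor
      · rw [Measure.map_map measurable_fst hdiag, ← hκα]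
        exact Measure.map_id
      · rw [Measure.map_map measurable_snd hdiag, ← hκβ]
        exact Measure.map_id
    have hW : wassersteinDist 1 d μ (μ.withDensity fun x => ENNReal.ofReal (g x)) ≤ 0 := by
      refine (iInf₂_le (κ.map fun x => (x, x)) hπ).trans ?_
      simp [hcdiag]
    simp [le_zero_iff.1 hW]
  have hW : wassersteinDist 1 d μ (μ.withDensity fun x => ENNReal.ofReal (g x)) ≤
      (α Set.univ)⁻¹ * ∫⁻ z, ENNReal.ofReal (d z.1 z.2) ∂α.prod β := by
    refine (iInf₂_le (κ.map (fun x => (x, x)) + (α Set.univ)⁻¹ • α.prod β) ?_).trans ?_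
    · have := isCoupling_diag_add_prod κ α β rfl hαβ hT0 hTt
      rwa [hκα, hκβ] at this
    · simp [lintegral_add_measure, hcdiag]
  have hcs := sq_lintegral_le_measure_univ_mul (α.prod β) hdm
  rw [← Set.univ_prod_univ, Measure.prod_prod, hαβ, ← sq] at hcs
  have hW2 : wassersteinDist 1 d μ (μ.withDensity fun x => ENNReal.ofReal (g x)) ^ 2 ≤
      ∫⁻ z, ENNReal.ofReal (d z.1 z.2) ^ 2 ∂α.prod β := by
    calc _ ≤ ((α Set.univ)⁻¹ * ∫⁻ z, ENNReal.ofReal (d z.1 z.2) ∂α.prod β) ^ 2 := by gcongr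
      _ ≤ ((α Set.univ)⁻¹) ^ 2 *
          (α Set.univ ^ 2 * ∫⁻ z, ENNReal.ofReal (d z.1 z.2) ^ 2 ∂α.prod β) := by
        rw [mul_pow]; gcongr
      _ = _ := by
        rw [← mul_assoc, ← mul_pow, ENNReal.inv_mul_cancel hT0 hTt, one_pow, one_mul]
  refine (mul_le_mul_right hW2 _).trans ?_
  refine mul_lintegral_sq_cost_le hd μ hg hg0 hδ hT0 hT1 ?_ ?_
  · rw [← hαβ, hβ, withDensity_apply _ MeasurableSet.univ, setLIntegral_univ]
  · rw [hα, withDensity_apply _ MeasurableSet.univ, setLIntegral_univ]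

lemma tpIneq_one_of_lintegral_exp {E : Type*} [MeasurableSpace E] {d : E → E → ℝ}
    (hd : Measurable fun q : E × E => d q.1 q.2) (hd0 : ∀ x, d x x = 0)
    (μ : Measure E) [IsProbabilityMeasure μ] {δ C : ℝ} (hδ : 0 < δ)
    (hM : ∫⁻ x, ∫⁻ y, ENNReal.ofReal (Real.exp (δ * d x y ^ 2)) ∂μ ∂μ ≠ ∞)
    (hC : (∫⁻ x, ∫⁻ y, ENNReal.ofReal (Real.exp (δ * d x y ^ 2)) ∂μ ∂μ).toReal ≤ δ * C) :
    TpIneq 1 d C μ := by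
  intro ν hν
  have hM1 := one_le_lintegral_exp d μ hδ.le
  set M := ∫⁻ x, ∫⁻ y, ENNReal.ofReal (Real.exp (δ * d x y ^ 2)) ∂μ ∂μ
  have hM1' : 1 ≤ M.toReal := by
    simpa using (ENNReal.toReal_le_toReal ENNReal.one_ne_top hM).2 hM1
  have hC0 : 0 < C := pos_of_mul_pos_right (by linarith : 0 < δ * C) hδ.le
  rw [relEntropy_eq_klDiv, klDiv_eq_lintegral_klFun]
  split_ifs with hac
  swap
  · rw [ENNReal.mul_top (by simpa using hC0)]
    exact le_top
  have hg : (fun x => ENNReal.ofReal (ν.rnDeriv μ x).toReal) =ᵐ[μ] ν.rnDeriv μ := by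
    filter_upwards [ν.rnDeriv_lt_top μ] with x hx
    exact ENNReal.ofReal_toReal hx.ne
  have hνeq : (μ.withDensity fun x => ENNReal.ofReal (ν.rnDeriv μ x).toReal) = ν := by
    rw [withDensity_congr_ae hg, Measure.withDensity_rnDeriv_eq _ _ hac]
  have hg1 : ∫⁻ x, ENNReal.ofReal (ν.rnDeriv μ x).toReal ∂μ = 1 := by
    rw [lintegral_congr_ae hg, Measure.lintegral_rnDeriv hac, measure_univ]
  have h := mul_wassersteinDist_one_sq_le hd hd0 μ (g := fun x => (ν.rnDeriv μ x).toReal)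
    (by fun_prop) (fun _ => ENNReal.toReal_nonneg) hg1 hδ.le
  rw [hνeq] at h
  set H := ∫⁻ x, ENNReal.ofReal (klFun (ν.rnDeriv μ x).toReal) ∂μ
  have hδ' : ENNReal.ofReal δ ≠ 0 := by simpa using hδ
  have hMC : M ≤ ENNReal.ofReal δ * ENNReal.ofReal C := by
    rw [← ENNReal.ofReal_mul hδ.le, ← ENNReal.ofReal_toReal hM]
    exact ENNReal.ofReal_le_ofReal hC
  refine (ENNReal.mul_le_mul_iff_right hδ' ENNReal.ofReal_ne_top).1 (h.trans ?_)
  rw [ENNReal.ofReal_mul zero_le_two, ENNReal.ofReal_ofNat]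
  calc 2 * H * M ≤ 2 * H * (ENNReal.ofReal δ * ENNReal.ofReal C) := by gcongr
    _ = _ := by ring

lemma lintegral_right_le_add_wassersteinDist {E : Type*} [MeasurableSpace E] {d : E → E → ℝ}
    (μ ν : Measure E) {F : E → ℝ≥0∞} (hF : Measurable F)
    (hFd : ∀ x y, F y ≤ F x + ENNReal.ofReal (d x y)) :
    ∫⁻ y, F y ∂ν ≤ ∫⁻ x, F x ∂μ + wassersteinDist 1 d μ ν := by
  rw [← tsub_le_iff_left]
  refine le_iInf₂ fun π hπ => ?_
  rw [tsub_le_iff_left, ← hπ.1, ← hπ.2, lintegral_map hF measurable_fst,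
    lintegral_map hF measurable_snd]
  simp only [ENNReal.rpow_one, div_one]
  rw [← lintegral_add_left (by fun_prop)]
  exact lintegral_mono fun z => hFd z.1 z.2

lemma lintegral_left_le_add_wassersteinDist {E : Type*} [MeasurableSpace E] {d : E → E → ℝ}
    (μ ν : Measure E) {F : E → ℝ≥0∞} (hF : Measurable F)
    (hFd : ∀ x y, F x ≤ F y + ENNReal.ofReal (d x y)) :
    ∫⁻ x, F x ∂μ ≤ ∫⁻ y, F y ∂ν + wassersteinDist 1 d μ ν := by
  rw [← tsub_le_iff_left]
  refine le_iInf₂ fun π hπ => ?_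
  rw [tsub_le_iff_left, ← hπ.1, ← hπ.2, lintegral_map hF measurable_fst,
    lintegral_map hF measurable_snd]
  simp only [ENNReal.rpow_one, div_one]
  rw [← lintegral_add_left (by fun_prop)]
  exact lintegral_mono fun z => hFd z.1 z.2

lemma relEntropy_cond {E : Type*} [MeasurableSpace E] (μ : Measure E) [IsProbabilityMeasure μ]
    {B : Set E} (hB : MeasurableSet B) (hB0 : μ B ≠ 0) :
    relEntropy (cond μ B) μ = ENNReal.ofReal (-Real.log (μ.real B)) := by
  have hprob := cond_isProbabilityMeasure hB0
  have hac : cond μ B ≪ μ := cond_absolutelyContinuous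
  have hrn : (cond μ B).rnDeriv μ =ᵐ[μ] (μ B)⁻¹ • B.indicator 1 := by
    refine (Measure.rnDeriv_smul_left_of_ne_top (μ.restrict B) μ
      (ENNReal.inv_ne_top.2 hB0)).trans ?_
    filter_upwards [Measure.rnDeriv_restrict_self μ hB] with x hx
    simp [hx]
  have hmem : ∀ᵐ x ∂cond μ B, x ∈ B :=
    (Measure.ae_smul_measure (ae_restrict_mem hB) _ : _)
  have hlog : (fun x => Real.log (((cond μ B).rnDeriv μ x).toReal)) =ᵐ[cond μ B]
      fun _ => -Real.log (μ.real B) := by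
    filter_upwards [hac.ae_le hrn, hmem] with x hx hxB
    rw [hx]
    simp [hxB, Measure.real]
  rw [relEntropy, if_pos ⟨hac, (integrable_const _).congr hlog.symm⟩, integral_congr_ae hlog]
  simp

lemma TpIneq.wassersteinDist_cond_le {E : Type*} [MeasurableSpace E] {d : E → E → ℝ} {C : ℝ}
    {μ : Measure E} [IsProbabilityMeasure μ] (h : TpIneq 1 d C μ) (hC : 0 ≤ C)
    {B : Set E} (hB : MeasurableSet B) (hB0 : μ B ≠ 0) :
    wassersteinDist 1 d μ (cond μ B) ≤
      ENNReal.ofReal (Real.sqrt (2 * C * -Real.log (μ.real B))) := by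
  have hL : 0 ≤ -Real.log (μ.real B) :=
    neg_nonneg.2 (Real.log_nonpos measureReal_nonneg measureReal_le_one)
  have h1 := h (cond μ B) (cond_isProbabilityMeasure hB0)
  rw [relEntropy_cond μ hB hB0, ← ENNReal.ofReal_mul (by positivity),
    ← Real.sq_sqrt (by positivity : 0 ≤ 2 * C * -Real.log (μ.real B)),
    ENNReal.ofReal_pow (Real.sqrt_nonneg _)] at h1
  exact (ENNReal.pow_le_pow_left_iff two_ne_zero).1 h1

lemma TpIneq.exists_measureReal_le_exp {E : Type*} [MeasurableSpace E] {d : E → E → ℝ} {C : ℝ}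
    {μ : Measure E} [IsProbabilityMeasure μ] (h : TpIneq 1 d C μ) (hC : 0 < C)
    {f : E → ℝ} (hf : Measurable f) (hf0 : ∀ x, 0 ≤ f x)
    (hfd : ∀ x y, |f x - f y| ≤ d x y) :
    ∃ m : ℝ, ∀ t, m ≤ t →
      μ.real {x | t ≤ f x} ≤ Real.exp (-((t - m) ^ 2 / (2 * C))) := by
  have hd0 : ∀ x y, 0 ≤ d x y := fun x y => (abs_nonneg _).trans (hfd x y)
  set F : E → ℝ≥0∞ := fun x => ENNReal.ofReal (f x) with hF
  have hFm : Measurable F := hf.ennreal_ofReal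
  have hF1 : ∀ x y, F y ≤ F x + ENNReal.ofReal (d x y) := fun x y => by
    rw [hF, ← ENNReal.ofReal_add (hf0 x) (hd0 x y)]
    exact ENNReal.ofReal_le_ofReal (by linarith [(abs_le.1 (hfd x y)).1])
  have hF2 : ∀ x y, F x ≤ F y + ENNReal.ofReal (d x y) := fun x y => by
    rw [hF, ← ENNReal.ofReal_add (hf0 y) (hd0 x y)]
    exact ENNReal.ofReal_le_ofReal (by linarith [(abs_le.1 (hfd x y)).2])
  have hfin : ∫⁻ x, F x ∂μ ≠ ∞ := by
    obtain ⟨n, hn⟩ : ∃ n : ℕ, μ {x | f x ≤ n} ≠ 0 := by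
      by_contra! hcon
      have h0 := measure_iUnion_null hcon
      have huniv : ⋃ n : ℕ, {x | f x ≤ n} = Set.univ :=
        Set.eq_univ_of_forall fun x => Set.mem_iUnion.2 (exists_nat_ge (f x))
      rw [huniv, measure_univ] at h0
      exact one_ne_zero h0
    have hB : MeasurableSet {x | f x ≤ n} := measurableSet_le hf measurable_const
    have := cond_isProbabilityMeasure hn
    have hcond : ∫⁻ x, F x ∂cond μ {x | f x ≤ n} ≤ ENNReal.ofReal n := by
      have hmem : ∀ᵐ x ∂cond μ {x | f x ≤ n}, f x ≤ n :=
        Measure.ae_smul_measure (ae_restrict_mem hB) _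
      calc ∫⁻ x, F x ∂cond μ {x | f x ≤ n}
          ≤ ∫⁻ _, ENNReal.ofReal n ∂cond μ {x | f x ≤ n} :=
            lintegral_mono_ae (hmem.mono fun x hx => ENNReal.ofReal_le_ofReal hx)
        _ = ENNReal.ofReal n := by simp
    refine ne_top_of_le_ne_top ?_ (lintegral_left_le_add_wassersteinDist μ (cond μ {x | f x ≤ n})
      hFm hF2)
    exact ENNReal.add_ne_top.2 ⟨ne_top_of_le_ne_top ENNReal.ofReal_ne_top hcond,
      ne_top_of_le_ne_top ENNReal.ofReal_ne_top (h.wassersteinDist_cond_le hC.le hB hn)⟩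
  refine ⟨(∫⁻ x, F x ∂μ).toReal, fun t ht => ?_⟩
  set m := (∫⁻ x, F x ∂μ).toReal with hm
  have hm0 : 0 ≤ m := ENNReal.toReal_nonneg
  have hB : MeasurableSet {x | t ≤ f x} := measurableSet_le measurable_const hf
  set B := {x | t ≤ f x} with hBdef
  by_cases hB0 : μ B = 0
  · simp [Measure.real, hB0, Real.exp_nonneg]
  have := cond_isProbabilityMeasure hB0
  have hmem : ∀ᵐ x ∂cond μ B, t ≤ f x := Measure.ae_smul_measure (ae_restrict_mem hB) _
  have hpos : 0 < μ.real B := ENNReal.toReal_pos hB0 (measure_ne_top _ _)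
  have hL : 0 ≤ -Real.log (μ.real B) :=
    neg_nonneg.2 (Real.log_nonpos measureReal_nonneg measureReal_le_one)
  have h1 : ENNReal.ofReal t ≤
      ENNReal.ofReal (m + Real.sqrt (2 * C * -Real.log (μ.real B))) := by
    calc ENNReal.ofReal t = ∫⁻ _, ENNReal.ofReal t ∂cond μ B := by simp
      _ ≤ ∫⁻ x, F x ∂cond μ B :=
        lintegral_mono_ae (hmem.mono fun x hx => ENNReal.ofReal_le_ofReal hx)
      _ ≤ ∫⁻ x, F x ∂μ + wassersteinDist 1 d μ (cond μ B) :=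
        lintegral_right_le_add_wassersteinDist μ (cond μ B) hFm hF1
      _ ≤ _ := by
        rw [ENNReal.ofReal_add hm0 (Real.sqrt_nonneg _), hm, ENNReal.ofReal_toReal hfin]
        gcongr
        exact h.wassersteinDist_cond_le hC.le hB hB0
  rw [ENNReal.ofReal_le_ofReal_iff (by positivity)] at h1
  have h2 : (t - m) ^ 2 ≤ 2 * C * -Real.log (μ.real B) :=
    (Real.le_sqrt (by linarith) (by positivity)).1 (by linarith)
  rw [← Real.log_le_iff_le_exp hpos, le_neg, div_le_iff₀ (by positivity)]
  linarith

lemma lintegral_exp_mul_sq_lt_top_of_tail {E : Type*} [MeasurableSpace E] {μ : Measure E}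
    [IsProbabilityMeasure μ] {f : E → ℝ} (hf : Measurable f) (hf0 : ∀ x, 0 ≤ f x)
    {c m : ℝ} (hc : 0 < c)
    (htail : ∀ t, m ≤ t → μ.real {x | t ≤ f x} ≤ Real.exp (-(c * (t - m) ^ 2))) :
    ∫⁻ x, ENNReal.ofReal (Real.exp (c / 4 * f x ^ 2)) ∂μ < ∞ := by
  set A := c * m + c / 2 + c / 2 * (m + 1) ^ 2 with hA
  have hbound : ∀ n : ℕ, Real.exp (c / 4 * ((n : ℝ) + 1) ^ 2) * μ.real {x | (n : ℝ) ≤ f x} ≤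
      Real.exp A * Real.exp (-c) ^ n := by
    intro n
    rw [← Real.exp_nat_mul, ← Real.exp_add]
    rcases le_total m n with h | h
    · calc _ ≤ Real.exp (c / 4 * ((n : ℝ) + 1) ^ 2) * Real.exp (-(c * ((n : ℝ) - m) ^ 2)) := by
            gcongr; exact htail _ h
        _ ≤ _ := by
          rw [← Real.exp_add, Real.exp_le_exp, hA]
          have h1 : 0 ≤ c * ((n : ℝ) - m - (m + 1)) ^ 2 := by positivity
          have h2 : 0 ≤ c * ((n : ℝ) - m - 1) ^ 2 := by positivity
          nlinarith
    · calc _ ≤ Real.exp (c / 4 * ((n : ℝ) + 1) ^ 2) * 1 := by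
            gcongr; exact measureReal_le_one
        _ ≤ _ := by
          rw [mul_one, Real.exp_le_exp, hA]
          have h1 : ((n : ℝ) + 1) ^ 2 ≤ (m + 1) ^ 2 := by gcongr
          have h2 : c * ((n : ℝ) + 1) ^ 2 ≤ c * (m + 1) ^ 2 := by gcongr
          have h3 : c * (n : ℝ) ≤ c * m := by gcongr
          nlinarith [mul_nonneg hc.le (sq_nonneg (m + 1))]
  have hsum : Summable fun n : ℕ => Real.exp A * Real.exp (-c) ^ n :=
    (summable_geometric_of_lt_one (Real.exp_nonneg _)
      (Real.exp_lt_one_iff.2 (by linarith))).mul_left _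
  have hpt : ∀ x, ENNReal.ofReal (Real.exp (c / 4 * f x ^ 2)) ≤
      ∑' n : ℕ, {x | (n : ℝ) ≤ f x}.indicator
        (fun _ => ENNReal.ofReal (Real.exp (c / 4 * ((n : ℝ) + 1) ^ 2))) x := by
    intro x
    refine le_trans ?_ (ENNReal.le_tsum ⌊f x⌋₊)
    rw [Set.indicator_of_mem (by exact Nat.floor_le (hf0 x))]
    have h1 := hf0 x
    have h2 := (Nat.lt_floor_add_one (f x)).le
    exact ENNReal.ofReal_le_ofReal (by gcongr)
  refine (lintegral_mono hpt).trans_lt ?_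
  have hmeas : ∀ n : ℕ, MeasurableSet {x | (n : ℝ) ≤ f x} :=
    fun n => measurableSet_le measurable_const hf
  rw [lintegral_tsum fun n => (measurable_const.indicator (hmeas n)).aemeasurable]
  refine lt_of_le_of_lt (ENNReal.tsum_le_tsum fun n => ?_) hsum.tsum_ofReal_lt_top
  rw [lintegral_indicator_const (hmeas n), ← ofReal_measureReal (measure_ne_top _ _),
    ← ENNReal.ofReal_mul (Real.exp_nonneg _)]
  exact ENNReal.ofReal_le_ofReal (hbound n)

lemma central_factorial_ratio_mul_le {M : ℝ} (hM : 1 ≤ M) (k : ℕ+) :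
    ((Nat.factorial (k : ℕ) : ℝ) ^ 2 / (Nat.factorial (2 * (k : ℕ))) * M) ^
      (1 / ((k : ℕ) : ℝ)) ≤ M := by
  have hk : (1 : ℝ) ≤ ((k : ℕ) : ℝ) := by exact_mod_cast k.pos
  have hfac : (Nat.factorial (k : ℕ) : ℝ) ^ 2 / (Nat.factorial (2 * (k : ℕ))) ≤ 1 := by
    rw [div_le_one (by positivity), sq, two_mul]
    exact_mod_cast Nat.le_of_dvd (Nat.factorial_pos _)
      (Nat.factorial_mul_factorial_dvd_factorial_add k k)
  calc _ ≤ M ^ (1 / ((k : ℕ) : ℝ)) := by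
        refine Real.rpow_le_rpow (by positivity) ?_ (by positivity)
        exact mul_le_of_le_one_left (by linarith) hfac
    _ ≤ M ^ (1 : ℝ) := Real.rpow_le_rpow_of_exponent_le hM ((div_le_one (by linarith)).2 hk)
    _ = M := Real.rpow_one M

/-- **Theorem 2.3: Gaussian-tail characterization of `T₁`.** `μ` satisfies `T₁(C)` for some
`C > 0` iff it has a square-exponential moment (1.5); in that case the constant can be taken
to be `(2/δ) ⨆ k ((k!)²/(2k)! ∬ e^{δd²} dμ dμ)^{1/k}`, which is finite. -/
theorem T1_iff_gaussian_tail
    {E : Type*} [MeasurableSpace E] [MetricSpace E]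
    (hd : Measurable fun q : E × E => dist q.1 q.2)
    (μ : Measure E) [IsProbabilityMeasure μ] :
    ((∃ C : ℝ, 0 < C ∧ TpIneq 1 dist C μ) ↔
      ∃ δ : ℝ, 0 < δ ∧ ∫⁻ x, ∫⁻ y, ENNReal.ofReal (Real.exp (δ * dist x y ^ 2)) ∂μ ∂μ < ∞) ∧
    ∀ δ : ℝ, 0 < δ →
      ∫⁻ x, ∫⁻ y, ENNReal.ofReal (Real.exp (δ * dist x y ^ 2)) ∂μ ∂μ < ∞ →
      BddAbove (Set.range fun k : ℕ+ =>
        ((Nat.factorial (k : ℕ) : ℝ) ^ 2 / (Nat.factorial (2 * (k : ℕ))) *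
            (∫⁻ x, ∫⁻ y, ENNReal.ofReal (Real.exp (δ * dist x y ^ 2)) ∂μ ∂μ).toReal) ^ (1 / ((k : ℕ) : ℝ))) ∧
      TpIneq 1 dist
        (2 / δ * ⨆ k : ℕ+,
          ((Nat.factorial (k : ℕ) : ℝ) ^ 2 / (Nat.factorial (2 * (k : ℕ))) *
            (∫⁻ x, ∫⁻ y, ENNReal.ofReal (Real.exp (δ * dist x y ^ 2)) ∂μ ∂μ).toReal) ^ (1 / ((k : ℕ) : ℝ))) μ := by
  have hbdd : ∀ δ : ℝ, 0 < δ →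
      ∫⁻ x, ∫⁻ y, ENNReal.ofReal (Real.exp (δ * dist x y ^ 2)) ∂μ ∂μ < ∞ →
      BddAbove (Set.range fun k : ℕ+ =>
        ((Nat.factorial (k : ℕ) : ℝ) ^ 2 / (Nat.factorial (2 * (k : ℕ))) *
            (∫⁻ x, ∫⁻ y, ENNReal.ofReal (Real.exp (δ * dist x y ^ 2)) ∂μ ∂μ).toReal) ^
              (1 / ((k : ℕ) : ℝ))) := by
    intro δ hδ hM
    have hM1 := (ENNReal.toReal_le_toReal ENNReal.one_ne_top hM.ne).2
      (one_le_lintegral_exp dist μ hδ.le)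
    rw [ENNReal.toReal_one] at hM1
    exact ⟨_, Set.forall_mem_range.2 (central_factorial_ratio_mul_le hM1)⟩
  refine ⟨⟨?_, ?_⟩, fun δ hδ hM => ⟨hbdd δ hδ hM, ?_⟩⟩
  · rintro ⟨C, hC, h⟩
    obtain ⟨x₀⟩ : Nonempty E := nonempty_of_isProbabilityMeasure μ
    have hf : Measurable fun x => dist x₀ x := hd.comp measurable_prodMk_left
    obtain ⟨m, htail⟩ := h.exists_measureReal_le_exp hC hf (fun _ => dist_nonneg)
      fun x y => by
        rw [dist_comm x₀ x, dist_comm x₀ y]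
        exact abs_dist_sub_le x y x₀
    have hc : 0 < 1 / (2 * C) := by positivity
    have hI := lintegral_exp_mul_sq_lt_top_of_tail hf (fun _ => dist_nonneg) hc
      fun t ht => (htail t ht).trans_eq (by congr 2; ring)
    set c := 1 / (2 * C)
    refine ⟨c / 8, by positivity, ?_⟩
    have hpt : ∀ x y, ENNReal.ofReal (Real.exp (c / 8 * dist x y ^ 2)) ≤
        ENNReal.ofReal (Real.exp (c / 4 * dist x₀ x ^ 2)) *
          ENNReal.ofReal (Real.exp (c / 4 * dist x₀ y ^ 2)) := by
      intro x y
      rw [← ENNReal.ofReal_mul (Real.exp_nonneg _), ← Real.exp_add]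
      refine ENNReal.ofReal_le_ofReal (Real.exp_le_exp.2 ?_)
      have h1 : dist x y ^ 2 ≤ (dist x₀ x + dist x₀ y) ^ 2 := by
        gcongr
        exact dist_triangle_left x y x₀
      have h2 : dist x y ^ 2 ≤ 2 * dist x₀ x ^ 2 + 2 * dist x₀ y ^ 2 := by
        linarith [sq_nonneg (dist x₀ x - dist x₀ y)]
      linarith [mul_le_mul_of_nonneg_left h2 (by positivity : 0 ≤ c / 8)]
    refine (lintegral_mono fun x => lintegral_mono (hpt x)).trans_lt ?_
    rw [lintegral_lintegral_mul (by fun_prop) (by fun_prop)]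
    exact ENNReal.mul_lt_top hI hI
  · rintro ⟨δ, hδ, hM⟩
    have hM1 := (ENNReal.toReal_le_toReal ENNReal.one_ne_top hM.ne).2
      (one_le_lintegral_exp dist μ hδ.le)
    rw [ENNReal.toReal_one] at hM1
    refine ⟨_, div_pos (zero_lt_one.trans_le hM1) hδ,
      tpIneq_one_of_lintegral_exp hd dist_self μ hδ hM.ne (mul_div_cancel₀ _ hδ.ne').ge⟩
  · refine tpIneq_one_of_lintegral_exp hd dist_self μ hδ hM.ne ?_
    have h1 := le_ciSup (hbdd δ hδ hM) 1
    norm_num at h1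
    rw [← mul_assoc, mul_div_cancel₀ _ hδ.ne']
    simp only [one_div]
    linarith

end
end

section
/- (Corollary 2.6: Hoeffding-type inequality.) Let (E,d) be a Polish metric space and ℙ a probability measure on E^n such that P_i(·|x^{i-1}) satisfies T_1(C) for all i and x^{i-1}, and condition (C1) holds with p = 1: there exist a_j ≥ 0 with r := Σ_{j=1}^∞ a_j < 1 and W_1^d(P_i(·|x^{i-1}), P_i(·|x̃^{i-1})) ≤ Σ_{j=1}^{i-1} a_j · d(x_{i-j}, x̃_{i-j}) for all i, x^{i-1}, x̃^{i-1}. Then for every f : E^n → ℝ such that for each k = 1,…,n, |f(…,x_k,…) − f(…,y_k,…)| ≤ α·d(x_k,y_k) when all other coordinates are fixed, one has 𝔼_ℙ exp(λ(f − 𝔼_ℙ f)) ≤ exp( C λ² α² n / (2(1−r)²) ) for all λ ∈ ℝ, and ℙ(f > 𝔼_ℙ f + t) ≤ exp( −t²(1−r)² / (2nCα²) ) for all t > 0. -/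
open MeasureTheory ProbabilityTheory ENNReal

noncomputable section

/-- The law on `E^n` of the (in general non-homogeneous, non-Markovian) random sequence
determined by the successive regular conditional laws `K i : (Fin i → E) → Measure E`
of the `(i+1)`-th coordinate given the first `i` coordinates. -/
def chainMeasure {E : Type*} [MeasurableSpace E]
    (K : (i : ℕ) → (Fin i → E) → Measure E) : (n : ℕ) → Measure (Fin n → E)
  | 0 => Measure.dirac (fun i => i.elim0)
  | n + 1 => (chainMeasure K n).bind fun x => (K n x).map (Fin.snoc x)

/-- The easy half of Kantorovich duality. -/
theorem abs_integral_sub_le_wassersteinDist {E : Type*} [MeasurableSpace E] {d : E → E → ℝ}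
    {μ ν : Measure E} {g : E → ℝ} (hg : Measurable g) (hμ : Integrable g μ) (hν : Integrable g ν)
    {L : ℝ} (hL : 0 < L) (hLip : ∀ y y', |g y - g y'| ≤ L * d y y') :
    ENNReal.ofReal |∫ y, g y ∂μ - ∫ y, g y ∂ν| ≤
      ENNReal.ofReal L * wassersteinDist 1 d μ ν := by
  unfold wassersteinDist
  simp only [ENNReal.mul_iInf_of_ne (ENNReal.ofReal_pos.2 hL).ne' ENNReal.ofReal_ne_top]
  refine le_iInf₂ fun π hπ => ?_
  obtain ⟨rfl, rfl⟩ := hπ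
  simp only [ENNReal.rpow_one, div_one]
  rw [integrable_map_measure hg.aestronglyMeasurable measurable_fst.aemeasurable] at hμ
  rw [integrable_map_measure hg.aestronglyMeasurable measurable_snd.aemeasurable] at hν
  rw [integral_map measurable_fst.aemeasurable hg.aestronglyMeasurable,
    integral_map measurable_snd.aemeasurable hg.aestronglyMeasurable,
    ← integral_sub (f := fun z : E × E => g z.1) (g := fun z : E × E => g z.2) hμ hν,
    ← lintegral_const_mul' _ _ ENNReal.ofReal_ne_top,
    ← Real.norm_eq_abs, ofReal_norm]
  refine (enorm_integral_le_lintegral_enorm _).trans (lintegral_mono fun z => ?_)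
  rw [← ofReal_norm, Real.norm_eq_abs, ← ENNReal.ofReal_mul hL.le]
  exact ENNReal.ofReal_le_ofReal (hLip _ _)

theorem relEntropy_tilted {E : Type*} [MeasurableSpace E] {μ : Measure E} [IsProbabilityMeasure μ]
    {h : E → ℝ} (hexp : Integrable (fun y => Real.exp (h y)) μ) (hint : Integrable h (μ.tilted h)) :
    relEntropy (μ.tilted h) μ =
      ENNReal.ofReal (∫ y, h y ∂μ.tilted h - Real.log (∫ y, Real.exp (h y) ∂μ)) := by
  have := isProbabilityMeasure_tilted hexp
  have hac : μ.tilted h ≪ μ := tilted_absolutelyContinuous μ h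
  have hlog := hac.ae_le (log_rnDeriv_tilted_left_self hexp)
  unfold relEntropy
  rw [if_pos ⟨hac, (integrable_congr hlog).2 (hint.sub (integrable_const _))⟩, integral_congr_ae hlog,
    integral_sub hint (integrable_const _)]
  simp

theorem TpIneq.integrable_dist {E : Type*} [MeasurableSpace E] [MetricSpace E]
    [SecondCountableTopology E] [BorelSpace E] {C : ℝ} {μ : Measure E} [IsProbabilityMeasure μ]
    (hT : TpIneq 1 dist C μ) (y₀ : E) : Integrable (fun y => dist y₀ y) μ := by
  have hm : Measurable fun y : E => dist y₀ y := by fun_prop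
  have hexp : Integrable (fun y => Real.exp (-dist y₀ y)) μ :=
    Integrable.of_bound (by fun_prop) 1 (.of_forall fun y => by simp)
  have hint : Integrable (fun y => -dist y₀ y) (μ.tilted fun y => -dist y₀ y) := by
    rw [integrable_tilted_iff hexp]
    refine Integrable.of_bound (by fun_prop) 1 (.of_forall fun y => ?_)
    have h1 := Real.add_one_le_exp (dist y₀ y)
    have h0 : 0 ≤ dist y₀ y := dist_nonneg
    simp only [smul_eq_mul, norm_mul, Real.norm_eq_abs, Real.abs_exp, abs_neg, abs_of_nonneg h0]
    rw [Real.exp_neg, inv_mul_le_iff₀ (Real.exp_pos _)]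
    linarith
  have hν := isProbabilityMeasure_tilted hexp
  have hW := hT _ hν
  rw [relEntropy_tilted hexp hint] at hW
  have hfin : wassersteinDist 1 dist μ (μ.tilted fun y => -dist y₀ y) < ∞ := by
    have := hW.trans_lt (ENNReal.mul_lt_top ENNReal.ofReal_lt_top ENNReal.ofReal_lt_top)
    simpa using this
  unfold wassersteinDist at hfin
  simp only [iInf_lt_iff, ENNReal.rpow_one, div_one] at hfin
  obtain ⟨π, ⟨h1, h2⟩, hcost⟩ := hfin
  refine ⟨hm.aestronglyMeasurable, ?_⟩
  have hν' : ∫⁻ z, ENNReal.ofReal (dist y₀ z.2) ∂π < ∞ := by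
    have := hint.neg.lintegral_lt_top
    simp only [Pi.neg_apply, neg_neg] at this
    rwa [← h2, lintegral_map (by fun_prop) measurable_snd] at this
  rw [hasFiniteIntegral_iff_ofReal (.of_forall fun _ => dist_nonneg)]
  rw [← h1, lintegral_map (by fun_prop) measurable_fst]
  calc ∫⁻ z, ENNReal.ofReal (dist y₀ z.1) ∂π
      ≤ ∫⁻ z, (ENNReal.ofReal (dist z.1 z.2) + ENNReal.ofReal (dist y₀ z.2)) ∂π := by
        refine lintegral_mono fun z => ?_
        rw [← ENNReal.ofReal_add dist_nonneg dist_nonneg]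
        refine ENNReal.ofReal_le_ofReal ?_
        rw [dist_comm z.1, add_comm]
        exact dist_triangle _ _ _
    _ = _ := lintegral_add_right _ (by fun_prop)
    _ < ∞ := ENNReal.add_lt_top.2 ⟨hcost, hν'⟩

theorem measurable_of_abs_sub_le {E : Type*} [MeasurableSpace E] [MetricSpace E] [BorelSpace E]
    {g : E → ℝ} {L : ℝ} (hL : 0 ≤ L) (hLip : ∀ y y', |g y - g y'| ≤ L * dist y y') :
    Measurable g :=
  (LipschitzWith.of_dist_le_mul (K := NNReal.mk L hL) hLip).continuous.measurable

theorem TpIneq.integrable_of_abs_sub_le {E : Type*} [MeasurableSpace E] [MetricSpace E]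
    [SecondCountableTopology E] [BorelSpace E] {C : ℝ} {μ : Measure E} [IsProbabilityMeasure μ]
    (hT : TpIneq 1 dist C μ) {g : E → ℝ} {L : ℝ} (hL : 0 ≤ L)
    (hLip : ∀ y y', |g y - g y'| ≤ L * dist y y') : Integrable g μ := by
  obtain ⟨y₀⟩ := μ.nonempty_of_neZero
  have hm := measurable_of_abs_sub_le hL hLip
  refine (((hT.integrable_dist y₀).const_mul L).add (integrable_const |g y₀|)).mono'
    hm.aestronglyMeasurable (.of_forall fun y => ?_)
  have h1 := hLip y₀ y
  have h2 := abs_sub_abs_le_abs_sub (g y) (g y₀)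
  rw [abs_sub_comm] at h2
  simp only [Real.norm_eq_abs, Pi.add_apply]
  linarith

/-- The easy direction of the Bobkov--Götze theorem, for bounded functions. -/
theorem TpIneq.integral_exp_le_of_bounded {E : Type*} [MeasurableSpace E] [MetricSpace E]
    [SecondCountableTopology E] [BorelSpace E] {C : ℝ} (hC : 0 ≤ C) {μ : Measure E}
    [IsProbabilityMeasure μ] (hT : TpIneq 1 dist C μ) {g : E → ℝ} {L : ℝ} (hL : 0 < L)
    (hLip : ∀ y y', |g y - g y'| ≤ L * dist y y') {B : ℝ} (hB : ∀ y, |g y| ≤ B) (l : ℝ) :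
    ∫ y, Real.exp (l * g y) ∂μ ≤ Real.exp (l * ∫ y, g y ∂μ + C * l ^ 2 * L ^ 2 / 2) := by
  have hm := measurable_of_abs_sub_le hL.le hLip
  have hexp : Integrable (fun y => Real.exp (l * g y)) μ := by
    refine Integrable.of_bound (by fun_prop) (Real.exp (|l| * B)) (.of_forall fun y => ?_)
    rw [Real.norm_eq_abs, Real.abs_exp, Real.exp_le_exp]
    refine (le_abs_self _).trans ?_
    rw [abs_mul]
    exact mul_le_mul_of_nonneg_left (hB y) (abs_nonneg l)
  have hν := isProbabilityMeasure_tilted hexp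
  set ν := μ.tilted fun y => l * g y
  have hgν : Integrable g ν := .of_bound hm.aestronglyMeasurable B (.of_forall hB)
  have hgμ : Integrable g μ := .of_bound hm.aestronglyMeasurable B (.of_forall hB)
  have hW := hT ν hν
  rw [relEntropy_tilted hexp (hgν.const_mul l), integral_const_mul] at hW
  set Z := ∫ y, Real.exp (l * g y) ∂μ
  set H := l * ∫ y, g y ∂ν - Real.log Z
  set D := ∫ y, g y ∂μ - ∫ y, g y ∂ν
  have hD := abs_integral_sub_le_wassersteinDist hm hgμ hgν hL hLip
  have hH : 0 ≤ H := by
    have hac : ν ≪ μ := tilted_absolutelyContinuous μ _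
    have hlog := hac.ae_le (log_rnDeriv_tilted_left_self hexp)
    have hi := (hgν.const_mul l).sub (integrable_const (Real.log Z))
    have h := InformationTheory.integral_llr_add_sub_measure_univ_nonneg hac
      ((integrable_congr hlog).2 hi)
    unfold llr at h
    rw [integral_congr_ae hlog, integral_sub (hgν.const_mul l) (integrable_const _),
      integral_const_mul] at h
    simpa [H, Z] using h
  have hDH : D ^ 2 ≤ L ^ 2 * (2 * C * H) := by
    rw [← ENNReal.ofReal_le_ofReal_iff (by positivity), ENNReal.ofReal_mul (by positivity),
      ENNReal.ofReal_mul (by positivity), ← sq_abs D, ENNReal.ofReal_pow (abs_nonneg _),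
      ENNReal.ofReal_pow hL.le]
    calc _ ≤ _ := pow_le_pow_left' hD 2
      _ = _ := mul_pow _ _ _
      _ ≤ _ := mul_le_mul_right hW _
  have hZ : 0 < Z := integral_exp_pos hexp
  rw [← Real.log_le_iff_le_exp hZ]
  suffices h : -(l * D) ≤ H + C * l ^ 2 * L ^ 2 / 2 by
    simp only [H, D] at h
    linarith
  refine (neg_le_abs _).trans (abs_le_of_sq_le_sq ?_ (by positivity))
  have : (l * D) ^ 2 ≤ l ^ 2 * (L ^ 2 * (2 * C * H)) := by
    rw [mul_pow]
    gcongr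
  nlinarith [sq_nonneg (H - C * l ^ 2 * L ^ 2 / 2)]

open Filter Topology in
/-- The easy direction of the Bobkov--Götze theorem. -/
theorem TpIneq.lintegral_exp_le {E : Type*} [MeasurableSpace E] [MetricSpace E]
    [SecondCountableTopology E] [BorelSpace E] {C : ℝ} (hC : 0 ≤ C) {μ : Measure E}
    [IsProbabilityMeasure μ] (hT : TpIneq 1 dist C μ) {g : E → ℝ} {L : ℝ} (hL : 0 < L)
    (hLip : ∀ y y', |g y - g y'| ≤ L * dist y y') (l : ℝ) :
    ∫⁻ y, ENNReal.ofReal (Real.exp (l * g y)) ∂μ ≤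
      ENNReal.ofReal (Real.exp (l * ∫ y, g y ∂μ + C * l ^ 2 * L ^ 2 / 2)) := by
  have hg := hT.integrable_of_abs_sub_le hL.le hLip
  have hm := measurable_of_abs_sub_le hL.le hLip
  let G : ℕ → E → ℝ := fun N y => max (-(N : ℝ)) (min (g y) N)
  have hGm : ∀ N, Measurable (G N) := fun N => by fun_prop
  have hGN : ∀ N y, |G N y| ≤ N := fun N y =>
    abs_le.2 ⟨le_max_left _ _, max_le (by linarith [N.cast_nonneg (α := ℝ)]) (min_le_right _ _)⟩
  have hGg : ∀ N y, |G N y| ≤ |g y| := by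
    intro N y
    have hN := N.cast_nonneg (α := ℝ)
    refine abs_le.2 ⟨?_, max_le (by linarith [abs_nonneg (g y)])
      ((min_le_left _ _).trans (le_abs_self _))⟩
    rcases le_total (g y) N with h | h
    · exact le_max_of_le_right (by rw [min_eq_left h]; exact neg_abs_le _)
    · exact le_max_of_le_right (by rw [min_eq_right h]; linarith [abs_nonneg (g y)])
  have hGLip : ∀ N y y', |G N y - G N y'| ≤ L * dist y y' := by
    intro N y y'
    simp only [G, max_comm (-(N : ℝ))]
    exact (abs_max_sub_max_le_abs _ _ _).trans ((abs_inf_sub_inf_le_abs _ _ _).trans (hLip y y'))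
  have hGeq : ∀ y, ∀ᶠ N in atTop, G N y = g y := by
    intro y
    filter_upwards [eventually_ge_atTop ⌈|g y|⌉₊] with N hN
    have h := Nat.ceil_le.1 hN
    rw [abs_le] at h
    simp only [G]
    rw [min_eq_left h.2, max_eq_right h.1]
  have hlim : Tendsto (fun N => ∫ y, G N y ∂μ) atTop (𝓝 (∫ y, g y ∂μ)) :=
    tendsto_integral_of_dominated_convergence (fun y => |g y|)
      (fun N => (hGm N).aestronglyMeasurable) hg.abs (fun N => .of_forall (hGg N))
      (.of_forall fun y => tendsto_const_nhds.congr' ((hGeq y).mono fun _ h => h.symm))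
  have hlim' : Tendsto (fun N => ENNReal.ofReal (Real.exp
      (l * ∫ y, G N y ∂μ + C * l ^ 2 * L ^ 2 / 2))) atTop
      (𝓝 (ENNReal.ofReal (Real.exp (l * ∫ y, g y ∂μ + C * l ^ 2 * L ^ 2 / 2)))) :=
    ENNReal.tendsto_ofReal ((Real.continuous_exp.tendsto _).comp
      ((hlim.const_mul l).add_const _))
  calc ∫⁻ y, ENNReal.ofReal (Real.exp (l * g y)) ∂μ
      = ∫⁻ y, liminf (fun N => ENNReal.ofReal (Real.exp (l * G N y))) atTop ∂μ := by
        refine lintegral_congr fun y => (Tendsto.liminf_eq ?_).symm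
        refine tendsto_const_nhds.congr' ((hGeq y).mono fun N h => ?_)
        simp only [h]
    _ ≤ liminf (fun N => ∫⁻ y, ENNReal.ofReal (Real.exp (l * G N y)) ∂μ) atTop :=
        lintegral_liminf_le fun N => by fun_prop
    _ ≤ liminf (fun N => ENNReal.ofReal (Real.exp
          (l * ∫ y, G N y ∂μ + C * l ^ 2 * L ^ 2 / 2))) atTop := by
        refine liminf_le_liminf (.of_forall fun N => ?_)
        have hexp : Integrable (fun y => Real.exp (l * G N y)) μ := by
          refine Integrable.of_bound (by fun_prop) (Real.exp (|l| * N)) (.of_forall fun y => ?_)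
          rw [Real.norm_eq_abs, Real.abs_exp, Real.exp_le_exp]
          refine (le_abs_self _).trans ?_
          rw [abs_mul]
          exact mul_le_mul_of_nonneg_left (hGN N y) (abs_nonneg l)
        rw [← ofReal_integral_eq_lintegral_ofReal hexp (.of_forall fun _ => (Real.exp_pos _).le)]
        exact ENNReal.ofReal_le_ofReal
          (hT.integral_exp_le_of_bounded hC hL (hGLip N) (hGN N) l)
    _ = _ := hlim'.liminf_eq

theorem integrable_of_lintegral_exp_lt_top {Ω : Type*} [MeasurableSpace Ω] {μ : Measure Ω}
    {g : Ω → ℝ} (hg : AEStronglyMeasurable g μ)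
    (h : ∀ l : ℝ, ∫⁻ y, ENNReal.ofReal (Real.exp (l * g y)) ∂μ < ∞) : Integrable g μ := by
  have hexp : ∀ l : ℝ, Integrable (fun y => Real.exp (l * g y)) μ := fun l =>
    ⟨Real.continuous_exp.comp_aestronglyMeasurable (hg.const_mul l),
      (hasFiniteIntegral_iff_ofReal (.of_forall fun _ => (Real.exp_pos _).le)).2 (h l)⟩
  refine ((hexp 1).add (hexp (-1))).mono' hg (.of_forall fun y => ?_)
  simp only [Pi.add_apply, one_mul, neg_mul, Real.norm_eq_abs]
  refine abs_le.2 ⟨?_, ?_⟩ <;>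
  linarith [Real.add_one_le_exp (g y), Real.add_one_le_exp (-g y), Real.exp_pos (g y),
    Real.exp_pos (-g y)]

theorem measurable_snoc_uncurry {E : Type*} [MeasurableSpace E] (n : ℕ) :
    Measurable fun z : (Fin n → E) × E => (Fin.snoc z.1 z.2 : Fin (n + 1) → E) := by
  refine measurable_pi_lambda _ fun i => ?_
  refine Fin.lastCases ?_ (fun j => ?_) i
  · simpa using measurable_snd
  · simp only [Fin.snoc_castSucc]
    fun_prop

theorem measurable_snoc {E : Type*} [MeasurableSpace E] {n : ℕ} (x : Fin n → E) :
    Measurable fun y : E => (Fin.snoc x y : Fin (n + 1) → E) :=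
  (measurable_snoc_uncurry n).comp measurable_prodMk_left

/-- The transition kernel appending one coordinate to the first `n` ones. -/
def snocKernel {E : Type*} [MeasurableSpace E] (K : (i : ℕ) → (Fin i → E) → Measure E)
    (hKm : ∀ i, Measurable (K i)) (hKp : ∀ i x, IsProbabilityMeasure (K i x)) (n : ℕ) :
    Kernel (Fin n → E) (Fin (n + 1) → E) where
  toFun x := (K n x).map (Fin.snoc x)
  measurable' := by
    refine Measure.measurable_of_measurable_coe _ fun s hs => ?_
    let κ : Kernel (Fin n → E) E := ⟨K n, hKm n⟩
    have : IsMarkovKernel κ := ⟨hKp n⟩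
    have h := Kernel.measurable_kernel_prodMk_left (κ := κ) (measurable_snoc_uncurry n hs)
    simp only [Measure.map_apply (measurable_snoc _) hs]
    exact h

theorem chainMeasure_succ {E : Type*} [MeasurableSpace E]
    (K : (i : ℕ) → (Fin i → E) → Measure E)
    (hKm : ∀ i, Measurable (K i)) (hKp : ∀ i x, IsProbabilityMeasure (K i x)) (n : ℕ) :
    chainMeasure K (n + 1) = (chainMeasure K n).bind (snocKernel K hKm hKp n) := rfl

theorem isProbabilityMeasure_chainMeasure {E : Type*} [MeasurableSpace E]
    (K : (i : ℕ) → (Fin i → E) → Measure E)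
    (hKm : ∀ i, Measurable (K i)) (hKp : ∀ i x, IsProbabilityMeasure (K i x)) (n : ℕ) :
    IsProbabilityMeasure (chainMeasure K n) := by
  induction n with
  | zero => unfold chainMeasure; infer_instance
  | succ n ih =>
    have : IsMarkovKernel (snocKernel K hKm hKp n) :=
      ⟨fun x => Measure.isProbabilityMeasure_map (measurable_snoc x).aemeasurable⟩
    rw [chainMeasure_succ K hKm hKp]
    infer_instance

theorem measurable_of_abs_sub_le_sum {E : Type*} [MeasurableSpace E] [MetricSpace E]
    [SecondCountableTopology E] [BorelSpace E] {n : ℕ} {f : (Fin n → E) → ℝ} {b : Fin n → ℝ}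
    (hf : ∀ x x', |f x - f x'| ≤ ∑ k, b k * dist (x k) (x' k)) : Measurable f := by
  refine Continuous.measurable (continuous_iff_continuousAt.2 fun x => ?_)
  refine tendsto_iff_dist_tendsto_zero.2 (squeeze_zero (fun _ => dist_nonneg)
    (fun x' => hf x' x) ?_)
  have h : Continuous fun x' : Fin n → E => ∑ k, b k * dist (x' k) (x k) := by fun_prop
  simpa using h.tendsto x

theorem abs_sub_le_sum_of_update {E : Type*} [MetricSpace E] {n : ℕ} {f : (Fin n → E) → ℝ}
    {α : ℝ} (hflip : ∀ (x : Fin n → E) (k : Fin n) (y : E),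
      |f x - f (Function.update x k y)| ≤ α * dist (x k) y) (x x' : Fin n → E) :
    |f x - f x'| ≤ ∑ k, α * dist (x k) (x' k) := by
  suffices h : ∀ s : Finset (Fin n),
      |f x - f (s.piecewise x' x)| ≤ ∑ k ∈ s, α * dist (x k) (x' k) by
    simpa using h Finset.univ
  intro s
  induction s using Finset.induction_on with
  | empty => simp
  | insert k s hk ih =>
    have h := hflip (s.piecewise x' x) k (x' k)
    rw [Finset.piecewise_eq_of_notMem _ _ _ hk] at h
    rw [Finset.piecewise_insert, Finset.sum_insert hk]
    linarith [abs_sub_le (f x) (f (s.piecewise x' x))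
      (f (Function.update (s.piecewise x' x) k (x' k)))]

/-- The Laplace transform bound along the chain. The Lipschitz coefficient of the `k`-th coordinate
is the one which is preserved by integrating out the last coordinate. -/
theorem lintegral_exp_le_chainMeasure {E : Type*} [MeasurableSpace E]
    [MetricSpace E] [SecondCountableTopology E] [BorelSpace E] {C : ℝ} (hC : 0 ≤ C)
    (K : (i : ℕ) → (Fin i → E) → Measure E)
    (hKm : ∀ i, Measurable (K i)) (hKp : ∀ i x, IsProbabilityMeasure (K i x))
    (hT : ∀ (i : ℕ) (x : Fin i → E), TpIneq 1 dist C (K i x))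
    {a : ℕ → ℝ} (ha : ∀ j, 0 ≤ a j)
    (hC1 : ∀ (i : ℕ) (x x' : Fin i → E),
      wassersteinDist 1 dist (K i x) (K i x') ≤
        ENNReal.ofReal (∑ k : Fin i, a (i - (k : ℕ)) * dist (x k) (x' k)))
    {M : ℝ} (hM : 0 < M) (n : ℕ) (f : (Fin n → E) → ℝ)
    (hf : ∀ x x', |f x - f x'| ≤ ∑ k : Fin n,
      M * (1 - ∑ i ∈ Finset.range (n - 1 - k), a (i + 1)) * dist (x k) (x' k)) :
    ∀ l : ℝ, ∫⁻ x, ENNReal.ofReal (Real.exp (l * f x)) ∂chainMeasure K n ≤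
        ENNReal.ofReal (Real.exp (l * ∫ x, f x ∂chainMeasure K n + C * l ^ 2 * M ^ 2 * n / 2)) := by
  induction n with
  | zero =>
    simp [chainMeasure]
  | succ n ih =>
    have hfm := measurable_of_abs_sub_le_sum hf
    let b : ℕ → ℝ := fun k => M * (1 - ∑ i ∈ Finset.range (n - k), a (i + 1))
    have hf' : ∀ x x' y y', |f (Fin.snoc x y) - f (Fin.snoc x' y')| ≤
        (∑ k : Fin n, b k * dist (x k) (x' k)) + M * dist y y' := by
      intro x x' y y'
      refine (hf _ _).trans_eq ?_
      rw [Fin.sum_univ_castSucc]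
      simp [b]
    have hLip : ∀ x y y', |f (Fin.snoc x y) - f (Fin.snoc x y')| ≤ M * dist y y' := fun x y y' => by
      simpa using hf' x x y y'
    have hint : ∀ x x' : Fin n → E, Integrable (fun y => f (Fin.snoc x y)) (K n x') := fun x x' =>
      have := hKp n x'
      (hT n x').integrable_of_abs_sub_le hM.le (hLip x)
    let g : (Fin n → E) → ℝ := fun x => ∫ y, f (Fin.snoc x y) ∂K n x
    have hg : ∀ x x', |g x - g x'| ≤ ∑ k : Fin n,
        M * (1 - ∑ i ∈ Finset.range (n - 1 - k), a (i + 1)) * dist (x k) (x' k) := by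
      intro x x'
      have := hKp n x
      have := hKp n x'
      have h1 : |g x - ∫ y, f (Fin.snoc x' y) ∂K n x| ≤ ∑ k : Fin n, b k * dist (x k) (x' k) := by
        rw [← integral_sub (hint x x) (hint x' x), ← Real.norm_eq_abs]
        refine (norm_integral_le_of_norm_le_const (.of_forall fun y => ?_)).trans_eq
          (by rw [probReal_univ, mul_one])
        simpa using hf' x x' y y
      have hsn : 0 ≤ ∑ k : Fin n, a (n - (k : ℕ)) * dist (x k) (x' k) :=
        Finset.sum_nonneg fun k _ => mul_nonneg (ha _) dist_nonneg
      have h2 : |∫ y, f (Fin.snoc x' y) ∂K n x - g x'| ≤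
          M * ∑ k : Fin n, a (n - (k : ℕ)) * dist (x k) (x' k) := by
        rw [← ENNReal.ofReal_le_ofReal_iff (by positivity), ENNReal.ofReal_mul hM.le]
        refine (abs_integral_sub_le_wassersteinDist (hfm.comp (measurable_snoc x'))
          (hint x' x) (hint x' x') hM (hLip x')).trans ?_
        gcongr
        exact hC1 n x x'
      refine (abs_sub_le _ _ _).trans ((add_le_add h1 h2).trans_eq ?_)
      rw [Finset.mul_sum, ← Finset.sum_add_distrib]
      refine Finset.sum_congr rfl fun k _ => ?_
      have hk : n - (k : ℕ) = n - 1 - k + 1 := by have := k.2; omega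
      simp only [b, hk, Finset.sum_range_succ]
      ring
    rw [chainMeasure_succ K hKm hKp]
    have hstep : ∀ l : ℝ, ∫⁻ x, ENNReal.ofReal (Real.exp (l * f x))
        ∂(chainMeasure K n).bind (snocKernel K hKm hKp n) ≤ ENNReal.ofReal (Real.exp
          (l * ∫ x, g x ∂chainMeasure K n + C * l ^ 2 * M ^ 2 * (n + 1 : ℕ) / 2)) := by
      intro l
      rw [Measure.lintegral_bind (Kernel.aemeasurable _) (by fun_prop)]
      calc _ ≤ ∫⁻ x, ENNReal.ofReal (Real.exp (C * l ^ 2 * M ^ 2 / 2)) *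
            ENNReal.ofReal (Real.exp (l * g x)) ∂chainMeasure K n := by
            refine lintegral_mono fun x => ?_
            have := hKp n x
            rw [← ENNReal.ofReal_mul (Real.exp_pos _).le, ← Real.exp_add,
              add_comm (C * l ^ 2 * M ^ 2 / 2)]
            refine le_trans (le_of_eq ?_) ((hT n x).lintegral_exp_le hC hM (hLip x) l)
            exact lintegral_map (by fun_prop) (measurable_snoc x)
        _ = _ := lintegral_const_mul' _ _ ENNReal.ofReal_ne_top
        _ ≤ _ := mul_le_mul_right (ih g hg l) _
        _ = _ := by
            rw [← ENNReal.ofReal_mul (Real.exp_pos _).le, ← Real.exp_add]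
            congr 2
            push_cast
            ring
    have hfi := integrable_of_lintegral_exp_lt_top hfm.aestronglyMeasurable
      fun l => (hstep l).trans_lt ENNReal.ofReal_lt_top
    have hfg : ∫ x, f x ∂(chainMeasure K n).bind (snocKernel K hKm hKp n) =
        ∫ x, g x ∂chainMeasure K n := by
      rw [Measure.comp_eq_comp_const_apply] at hfi ⊢
      rw [Kernel.integral_comp hfi]
      refine integral_congr_ae (.of_forall fun x => ?_)
      exact integral_map (measurable_snoc x).aemeasurable hfm.aestronglyMeasurable
    rw [hfg]
    exact hstep

/-- **Corollary 2.6: Hoeffding-type inequality** for functions that are `α`-Lipschitz in each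
coordinate, under the assumptions of Theorem 2.5 with `p = 1`. -/
theorem hoeffding_dependent_tensorization
    {E : Type*} [MeasurableSpace E] [MetricSpace E] [CompleteSpace E]
    [SecondCountableTopology E] [BorelSpace E]
    (C : ℝ) (hC : 0 < C) (n : ℕ)
    (K : (i : ℕ) → (Fin i → E) → Measure E)
    (hKm : ∀ i, Measurable (K i)) (hKp : ∀ i x, IsProbabilityMeasure (K i x))
    (hT : ∀ (i : ℕ) (x : Fin i → E), TpIneq 1 dist C (K i x))
    (a : ℕ → ℝ) (ha : ∀ j, 0 ≤ a j)
    (hsum : Summable fun j : ℕ => a (j + 1))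
    (r : ℝ) (hr0 : 0 ≤ r) (hrp : r = ∑' j : ℕ, a (j + 1)) (hr1 : r < 1)
    (hC1 : ∀ (i : ℕ) (x x' : Fin i → E),
      wassersteinDist 1 dist (K i x) (K i x') ≤
        ENNReal.ofReal (∑ k : Fin i, a (i - (k : ℕ)) * dist (x k) (x' k)))
    (f : (Fin n → E) → ℝ) (hfm : Measurable f) (α : ℝ) (hα : 0 < α)
    (hflip : ∀ (x : Fin n → E) (k : Fin n) (y : E),
      |f x - f (Function.update x k y)| ≤ α * dist (x k) y) :
    (∀ l : ℝ,
      ∫ x, Real.exp (l * (f x - ∫ z, f z ∂chainMeasure K n)) ∂chainMeasure K n ≤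
        Real.exp (C * l ^ 2 * α ^ 2 * n / (2 * (1 - r) ^ 2))) ∧
    ∀ t : ℝ, 0 < t →
      chainMeasure K n {x | (∫ z, f z ∂chainMeasure K n) + t < f x} ≤
        ENNReal.ofReal (Real.exp (-(t ^ 2 * (1 - r) ^ 2) / (2 * n * C * α ^ 2))) := by
  have hr : 0 < 1 - r := by linarith
  have hM : 0 < α / (1 - r) := div_pos hα hr
  have hprob := isProbabilityMeasure_chainMeasure K hKm hKp n
  have hexp := lintegral_exp_le_chainMeasure hC.le K hKm hKp hT ha hC1 hM n f
    fun x x' => (abs_sub_le_sum_of_update hflip x x').trans <| Finset.sum_le_sum fun k _ => by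
      refine mul_le_mul_of_nonneg_right ?_ dist_nonneg
      have h : ∑ i ∈ Finset.range (n - 1 - k), a (i + 1) ≤ r :=
        hrp ▸ hsum.sum_le_tsum _ fun i _ => ha _
      rw [div_mul_eq_mul_div, le_div_iff₀ hr]
      exact mul_le_mul_of_nonneg_left (by linarith) hα.le
  set m := ∫ z, f z ∂chainMeasure K n
  have hcentered : ∀ l : ℝ, ∫⁻ x, ENNReal.ofReal (Real.exp (l * (f x - m))) ∂chainMeasure K n ≤
      ENNReal.ofReal (Real.exp (C * l ^ 2 * α ^ 2 * n / (2 * (1 - r) ^ 2))) := by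
    intro l
    calc _ = ∫⁻ x, ENNReal.ofReal (Real.exp (-(l * m))) * ENNReal.ofReal (Real.exp (l * f x))
          ∂chainMeasure K n := by
          refine lintegral_congr fun x => ?_
          rw [← ENNReal.ofReal_mul (Real.exp_pos _).le, ← Real.exp_add]
          congr 2
          ring
      _ = _ := lintegral_const_mul' _ _ ENNReal.ofReal_ne_top
      _ ≤ _ := mul_le_mul_right (hexp l) _
      _ = _ := by
          rw [← ENNReal.ofReal_mul (Real.exp_pos _).le, ← Real.exp_add]
          congr 2
          field_simp
          ring
  have hint : ∀ l : ℝ, Integrable (fun x => Real.exp (l * (f x - m))) (chainMeasure K n) :=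
    fun l => ⟨by fun_prop, (hasFiniteIntegral_iff_ofReal
      (.of_forall fun _ => (Real.exp_pos _).le)).2 ((hcentered l).trans_lt ENNReal.ofReal_lt_top)⟩
  have hmgf : ∀ l : ℝ, ∫ x, Real.exp (l * (f x - m)) ∂chainMeasure K n ≤
      Real.exp (C * l ^ 2 * α ^ 2 * n / (2 * (1 - r) ^ 2)) := fun l => by
    rw [← ENNReal.ofReal_le_ofReal_iff (Real.exp_pos _).le,
      ofReal_integral_eq_lintegral_ofReal (hint l) (.of_forall fun _ => (Real.exp_pos _).le)]
    exact hcentered l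
  refine ⟨hmgf, fun t ht => ?_⟩
  have hsub : HasSubgaussianMGF (fun x => f x - m)
      (NNReal.mk (C * α ^ 2 * n / (1 - r) ^ 2) (by positivity)) (chainMeasure K n) := by
    refine ⟨hint, fun l => (hmgf l).trans_eq ?_⟩
    rw [NNReal.coe_mk]
    congr 1
    field_simp
  have htail := hsub.measure_ge_le ht.le
  rw [NNReal.coe_mk] at htail
  refine (measure_mono (t := {x | t ≤ f x - m}) fun x hx => ?_).trans ?_
  · rw [Set.mem_ofPred_eq] at hx ⊢
    linarith
  · rw [← ofReal_measureReal]
    refine ENNReal.ofReal_le_ofReal (htail.trans_eq ?_)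
    congr 1
    rw [mul_div_assoc', div_div_eq_mul_div, neg_mul]
    congr 1
    ring

end
end
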